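/- arXiv:1610.05740 — 3 statements merged into one kernel-verified Lean document; each statement's English description precedes it below -/
import Mathlib

section
/- Let ρ ∈ (0,∞) and let F : [−ρ,ρ] → ℝ. The following are equivalent: (1) for every positive semidefinite Hankel matrix of any finite size with entries in [−ρ,ρ], applying F entrywise yields a positive semidefinite matrix; (2) the same preservation holds for all positive semidefinite Hankel matrices with entries in [−ρ,ρ] that arise as truncated moment matrices of admissible measures; (3) F is real analytic on (−ρ,ρ), absolutely monotonic on (0,ρ) (all derivatives non-negative there), and F(ρ) ≥ lim_{x→ρ⁻} F(x) together with |F(−ρ)| ≤ F(ρ). -/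
open MeasureTheory Filter Set

/-- An admissible measure: a non-negative Borel measure on `ℝ` all of whose absolute
moments are finite. -/
def IsAdmissible (μ : Measure ℝ) : Prop := ∀ k : ℕ, Integrable (fun x => x ^ k) μ

/-- The `k`-th power moment of a measure. -/
noncomputable def moment (μ : Measure ℝ) (k : ℕ) : ℝ := ∫ x, x ^ k ∂μ

/-- A Hankel matrix: the `(i,j)` entry depends only on `i + j`. -/
def IsHankelMat {n : ℕ} (A : Matrix (Fin n) (Fin n) ℝ) : Prop :=
  ∀ i j k l : Fin n, (i : ℕ) + (j : ℕ) = (k : ℕ) + (l : ℕ) → A i j = A k l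

/-!
Testing a preserver `F` on finitely atomic measures already forces everything. A mass at `1` and
one at `0` give monotonicity on `[0, ρ]`; Cauchy–Schwarz for the Hankel form of
`c₁ δ₁ + c₂ δ₋₁ + b δ_{1/2}` then transports continuity from one point of `[0, ρ]` to every
smaller `|x|`. Averaging `F` to the right keeps it a preserver and makes it smooth. For smooth `F`,
expanding `F (a (-1)ᵏ + b 2⁻ᵏ)` at `b = 0` and testing against polynomials killing the lower-order
terms gives `|F⁽ⁿ⁾(-a)| ≤ F⁽ⁿ⁾(a)`, so by Bernstein's argument `F` is a power series with
non-negative coefficients, and these survive the removal of the mollification by compactness.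

Conversely, such a power series preserves positivity by the Schur product theorem. The entries
equal to `ρ` are handled by writing `F` as its left-continuous version plus a non-negative
multiple of the indicator of `ρ`, a limit of powers. A positive semidefinite Hankel matrix with an
entry `-ρ` has all its entries equal to `ρ (-1)ⁱ⁺ʲ`.
-/

open Polynomial (X C basisMonomials)
open scoped Polynomial Topology ContDiff Convolution

section RieszFunctional

/-- The Riesz functional of a sequence `s`: the linear functional on `ℝ[X]` with `X ^ k ↦ s k`.
Bundling it as an equivalence records that it is also linear in `s`. -/
noncomputable def rieszFunctional : (ℕ → ℝ) ≃ₗ[ℝ] (ℝ[X] →ₗ[ℝ] ℝ) :=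
  (basisMonomials ℝ).constr ℝ

lemma rieszFunctional_apply (s : ℕ → ℝ) (p : ℝ[X]) :
    rieszFunctional s p = ∑ k ∈ p.support, p.coeff k * s k := by
  simp [rieszFunctional, Module.Basis.constr_apply, basisMonomials, Finsupp.sum, Polynomial.coeff,
    Polynomial.support]

@[simp]
lemma rieszFunctional_X_pow (s : ℕ → ℝ) (k : ℕ) : rieszFunctional s (X ^ k) = s k := by
  simp [rieszFunctional_apply, Polynomial.support_X_pow]

@[simp]
lemma rieszFunctional_one (s : ℕ → ℝ) : rieszFunctional s 1 = s 0 := by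
  simpa using rieszFunctional_X_pow s 0

@[simp]
lemma rieszFunctional_X (s : ℕ → ℝ) : rieszFunctional s X = s 1 := by
  simpa using rieszFunctional_X_pow s 1

lemma rieszFunctional_pow (z : ℝ) (p : ℝ[X]) : rieszFunctional (fun k => z ^ k) p = p.eval z := by
  rw [rieszFunctional_apply, Polynomial.eval_eq_sum, Polynomial.sum_def]

/-- Positive semidefinite sequences, characterised by their Riesz functional being non-negative
on squares; equivalently all Hankel matrices `(s (i + j))` are positive semidefinite. -/
def IsPosSemidefSeq (s : ℕ → ℝ) : Prop := ∀ p : ℝ[X], 0 ≤ rieszFunctional s (p * p)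

/-- The `n × n` Hankel matrix with entries `s (i + j)`. -/
def hankelMatrix (s : ℕ → ℝ) (n : ℕ) : Matrix (Fin n) (Fin n) ℝ :=
  Matrix.of fun i j => s ((i : ℕ) + (j : ℕ))

lemma dotProduct_hankelMatrix_mulVec (s : ℕ → ℝ) {n : ℕ} (v : Fin n → ℝ) :
    v ⬝ᵥ (hankelMatrix s n).mulVec v =
      rieszFunctional s ((∑ i, v i • X ^ (i : ℕ)) * ∑ i, v i • X ^ (i : ℕ)) := by
  rw [Finset.sum_mul_sum]
  simp only [smul_mul_smul_comm, ← pow_add, map_sum, map_smul, rieszFunctional_X_pow, smul_eq_mul]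
  simp only [dotProduct, Matrix.mulVec, hankelMatrix, Matrix.of_apply, Finset.mul_sum]
  exact Finset.sum_congr rfl fun i _ => Finset.sum_congr rfl fun j _ => by ring

lemma isPosSemidefSeq_iff_posSemidef_hankelMatrix {s : ℕ → ℝ} :
    IsPosSemidefSeq s ↔ ∀ n, (hankelMatrix s n).PosSemidef := by
  refine ⟨fun hs n => Matrix.PosSemidef.of_dotProduct_mulVec_nonneg ?_ fun v => ?_,
    fun hs p => ?_⟩
  · ext i j
    simp [hankelMatrix, add_comm]
  · rw [star_trivial, dotProduct_hankelMatrix_mulVec]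
    exact hs _
  · have hp : p = ∑ i : Fin (p.natDegree + 1), p.coeff i • X ^ (i : ℕ) := by
      rw [Fin.sum_univ_eq_sum_range (fun i => p.coeff i • (X : ℝ[X]) ^ i)]
      simpa only [Polynomial.smul_eq_C_mul] using p.as_sum_range_C_mul_X_pow
    have hnonneg := (hs (p.natDegree + 1)).dotProduct_mulVec_nonneg fun i => p.coeff i
    rwa [star_trivial, dotProduct_hankelMatrix_mulVec, ← hp] at hnonneg

lemma IsPosSemidefSeq.sq_rieszFunctional_mul_le {s : ℕ → ℝ} (hs : IsPosSemidefSeq s) (p q : ℝ[X]) :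
    rieszFunctional s (p * q) ^ 2 ≤ rieszFunctional s (p * p) * rieszFunctional s (q * q) :=
  LinearMap.BilinForm.apply_sq_le_of_symm ((LinearMap.mul ℝ ℝ[X]).compr₂ (rieszFunctional s)) hs
    ⟨fun p q => by simp [mul_comm]⟩ p q

lemma IsPosSemidefSeq.const_mul {s : ℕ → ℝ} (hs : IsPosSemidefSeq s) {c : ℝ} (hc : 0 ≤ c) :
    IsPosSemidefSeq fun k => c * s k := by
  intro p
  have hsmul : rieszFunctional (fun k => c * s k) = c • rieszFunctional s :=
    rieszFunctional.map_smul c s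
  rw [hsmul]
  exact mul_nonneg hc (hs p)

lemma isPosSemidefSeq_integral {Ω : Type*} [MeasurableSpace Ω] {μ : Measure Ω} {s : Ω → ℕ → ℝ}
    (hint : ∀ k, Integrable (fun x => s x k) μ) (hs : ∀ᵐ x ∂μ, IsPosSemidefSeq (s x)) :
    IsPosSemidefSeq fun k => ∫ x, s x k ∂μ := by
  intro p
  have hswap : rieszFunctional (fun k => ∫ x, s x k ∂μ) (p * p) =
      ∫ x, rieszFunctional (s x) (p * p) ∂μ := by
    simp only [rieszFunctional_apply, ← integral_const_mul]
    exact (integral_finsetSum _ fun k _ => (hint k).const_mul _).symm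
  rw [hswap]
  exact integral_nonneg_of_ae (hs.mono fun x hx => hx p)

end RieszFunctional

section AtomicMoment

variable {ι : Type*} [Fintype ι]

/-- The `k`-th moment of the finitely atomic measure `∑ i, w i • δ_{t i}`. -/
def atomicMoment (w t : ι → ℝ) (k : ℕ) : ℝ := ∑ i, w i * t i ^ k

lemma rieszFunctional_atomicMoment (w t : ι → ℝ) (p : ℝ[X]) :
    rieszFunctional (atomicMoment w t) p = ∑ i, w i * p.eval (t i) := by
  have hsum : atomicMoment w t = ∑ i, w i • fun k => t i ^ k := by
    ext k
    simp [atomicMoment]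
  simp [hsum, rieszFunctional_pow]

lemma isPosSemidefSeq_atomicMoment {w : ι → ℝ} (hw : ∀ i, 0 ≤ w i) (t : ι → ℝ) :
    IsPosSemidefSeq (atomicMoment w t) := by
  intro p
  rw [rieszFunctional_atomicMoment]
  exact Finset.sum_nonneg fun i _ => by
    rw [Polynomial.eval_mul]
    exact mul_nonneg (hw i) (mul_self_nonneg _)

lemma abs_atomicMoment_le {w t : ι → ℝ} (hw : ∀ i, 0 ≤ w i) (ht : ∀ i, |t i| ≤ 1) (k : ℕ) :
    |atomicMoment w t k| ≤ ∑ i, w i := by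
  refine (Finset.abs_sum_le_sum_abs _ _).trans (Finset.sum_le_sum fun i _ => ?_)
  rw [abs_mul, abs_of_nonneg (hw i), abs_pow]
  exact mul_le_of_le_one_right (hw i) (pow_le_one₀ (abs_nonneg _) (ht i))

lemma exists_isAdmissible_moment_eq_atomicMoment {w : ι → ℝ} (hw : ∀ i, 0 ≤ w i) (t : ι → ℝ) :
    ∃ μ : Measure ℝ, IsAdmissible μ ∧ ∀ k, moment μ k = atomicMoment w t k := by
  have hint (k : ℕ) (i : ι) :
      Integrable (fun x : ℝ => x ^ k) (ENNReal.ofReal (w i) • Measure.dirac (t i)) :=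
    (integrable_dirac (by simp)).smul_measure ENNReal.ofReal_ne_top
  refine ⟨∑ i, ENNReal.ofReal (w i) • Measure.dirac (t i),
    fun k => integrable_finsetSum_measure.2 fun i _ => hint k i, fun k => ?_⟩
  rw [moment, integral_finsetSum_measure fun i _ => hint k i]
  simp [atomicMoment, ENNReal.toReal_ofReal, hw]

lemma apply_mul_neg_one_pow_mul_pow_eq_atomicMoment (f : ℝ → ℝ) (a z : ℝ) (k : ℕ) :
    f (a * (-1) ^ k) * z ^ k =
      atomicMoment ![(f a + f (-a)) / 2, (f a - f (-a)) / 2] ![z, -z] k := by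
  rcases k.even_or_odd with hk | hk
  · simp only [atomicMoment, Fin.sum_univ_two, Matrix.cons_val, hk.neg_one_pow, hk.neg_pow, mul_one]
    ring
  · simp only [atomicMoment, Fin.sum_univ_two, Matrix.cons_val, hk.neg_one_pow, hk.neg_pow, mul_neg,
      mul_one]
    ring

end AtomicMoment

/-- `F` sends the moment sequences of finitely atomic measures on `[-1, 1]` of total mass at most
`R` to positive semidefinite sequences. All consequences of entrywise positivity preservation are
extracted from this property. -/
def PreservesAtomicMoments (F : ℝ → ℝ) (R : ℝ) : Prop :=
  ∀ ⦃n : ℕ⦄ (w t : Fin n → ℝ), (∀ i, 0 ≤ w i) → (∀ i, |t i| ≤ 1) → ∑ i, w i ≤ R →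
    IsPosSemidefSeq fun k => F (atomicMoment w t k)

namespace PreservesAtomicMoments

lemma of_forall_moment_matrix {F : ℝ → ℝ} {ρ : ℝ}
    (H : ∀ (n : ℕ) (A : Matrix (Fin n) (Fin n) ℝ),
      (∃ μ : Measure ℝ, IsAdmissible μ ∧ ∀ i j : Fin n, A i j = moment μ ((i : ℕ) + (j : ℕ))) →
      (∀ i j, A i j ∈ Icc (-ρ) ρ) → A.PosSemidef → (A.map F).PosSemidef) :
    PreservesAtomicMoments F ρ := by
  intro m w t hw ht hmass
  obtain ⟨μ, hμ, hmoment⟩ := exists_isAdmissible_moment_eq_atomicMoment hw t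
  refine isPosSemidefSeq_iff_posSemidef_hankelMatrix.2 fun n => ?_
  exact H n (hankelMatrix (atomicMoment w t) n) ⟨μ, hμ, fun i j => (hmoment _).symm⟩
    (fun i j => abs_le.1 ((abs_atomicMoment_le hw ht _).trans hmass))
    (isPosSemidefSeq_iff_posSemidef_hankelMatrix.1 (isPosSemidefSeq_atomicMoment hw t) n)

variable {F G : ℝ → ℝ} {R S : ℝ}

lemma mono (H : PreservesAtomicMoments F R) (hSR : S ≤ R) : PreservesAtomicMoments F S :=
  fun _ w t hw ht hmass => H w t hw ht (hmass.trans hSR)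

lemma congr (H : PreservesAtomicMoments F R) (hFG : EqOn F G (Icc (-R) R)) :
    PreservesAtomicMoments G R := by
  intro n w t hw ht hmass
  have heq : (fun k => G (atomicMoment w t k)) = fun k => F (atomicMoment w t k) :=
    funext fun k => (hFG (abs_le.1 ((abs_atomicMoment_le hw ht k).trans hmass))).symm
  exact heq ▸ H w t hw ht hmass

lemma comp_add_const (H : PreservesAtomicMoments F R) {c : ℝ} (hc : 0 ≤ c) :
    PreservesAtomicMoments (fun x => F (x + c)) (R - c) := by
  intro n w t hw ht hmass
  -- Adding `c` to every moment amounts to adding an atom of mass `c` at `1`.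
  have hcons := H (Fin.cons c w : Fin (n + 1) → ℝ) (Fin.cons 1 t)
    (Fin.cases hc hw) (Fin.cases (by simp) ht)
    (by simpa [Fin.sum_univ_succ] using le_sub_iff_add_le'.1 hmass)
  simpa [atomicMoment, Fin.sum_univ_succ, add_comm] using hcons

lemma monotoneOn (H : PreservesAtomicMoments F R) : MonotoneOn F (Icc 0 R) := by
  intro x hx y hy hxy
  have hpsd := H ![x, y - x] ![1, 0] (by simp [Fin.forall_fin_two, hx.1, hxy])
    (by simp [Fin.forall_fin_two]) (by simpa using hy.2) (1 - X)
  have hsq : (1 - X : ℝ[X]) * (1 - X) = 1 - (2 : ℝ) • X + X ^ 2 := by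
    simp only [Polynomial.smul_eq_C_mul, Polynomial.C_ofNat]
    ring
  have hdiff : 0 ≤ F y - 2 * F x + F x := by simpa [hsq, atomicMoment] using hpsd
  linarith

lemma abs_apply_neg_le (H : PreservesAtomicMoments F R) (hR : 0 ≤ R) : |F (-R)| ≤ F R := by
  have hpsd (c : ℝ) (hc : c * c = 1) : 0 ≤ F R + c * F (-R) := by
    have hsq : (1 + C c * X) * (1 + C c * X) = 1 + (2 * c) • X + X ^ 2 := by
      have hC : C c * C c = 1 := by rw [← map_mul, hc, map_one]
      simp only [Polynomial.smul_eq_C_mul, map_mul, Polynomial.C_ofNat]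
      linear_combination X ^ 2 * hC
    have hquad := H ![R] ![-1] (by simpa) (by simp) (by simp) (1 + C c * X)
    rw [hsq] at hquad
    have hexpand : 0 ≤ F R + 2 * c * F (-R) + F R := by simpa [atomicMoment] using hquad
    linarith
  rw [abs_le]
  constructor
  · linarith [hpsd 1 (by norm_num)]
  · linarith [hpsd (-1) (by norm_num)]

end PreservesAtomicMoments

section Continuity

lemma exists_continuousAt_of_monotoneOn_Ioo {F : ℝ → ℝ} {a b : ℝ} (hab : a < b)
    (hF : MonotoneOn F (Ioo a b)) : ∃ x ∈ Ioo a b, ContinuousAt F x := by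
  by_contra! hdisc
  have hsub : Ioo a b ⊆ {x | x ∈ Ioo a b ∧ ¬ ContinuousWithinAt F (Ioo a b) x} := fun x hx =>
    ⟨hx, fun hcont => hdisc x hx (hcont.continuousAt (isOpen_Ioo.mem_nhds hx))⟩
  exact Cardinal.Real.Ioo_countable_iff.not.2 hab.not_ge
    (hF.countable_not_continuousWithinAt.mono hsub)

namespace PreservesAtomicMoments

variable {F : ℝ → ℝ} {R : ℝ}

/- The atoms at `±1` carry all the mass but `b`, and `1 - X ^ 2` vanishes there: Cauchy–Schwarz
for `X` and `1 - X ^ 2` bounds an increment of `F` near `c` by a second difference near `M`. -/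
lemma sq_sub_le (H : PreservesAtomicMoments F R) {b c M : ℝ} (hb : 0 ≤ b) (hc : |c| ≤ M)
    (hM : M + b ≤ R) :
    (F (c + b / 2) - F (c + b / 8)) ^ 2 ≤
      F (M + b / 4) * (F (M + b) - 2 * F (M + b / 4) + F (M + b / 16)) := by
  obtain ⟨hc₁, hc₂⟩ := abs_le.1 hc
  set s := atomicMoment ![(M + c) / 2, (M - c) / 2, b] ![1, -1, 1 / 2]
  have hs : s 0 = M + b ∧ s 1 = c + b / 2 ∧ s 2 = M + b / 4 ∧ s 3 = c + b / 8 ∧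
      s 4 = M + b / 16 := by
    simp only [s, atomicMoment, Fin.sum_univ_three, Matrix.cons_val]
    refine ⟨?_, ?_, ?_, ?_, ?_⟩ <;> ring
  have hpsd : IsPosSemidefSeq fun k => F (s k) :=
    H ![(M + c) / 2, (M - c) / 2, b] ![1, -1, 1 / 2]
      (by
        simp only [Fin.forall_fin_succ, Matrix.cons_val_zero, Matrix.cons_val_succ,
          IsEmpty.forall_iff, and_true]
        refine ⟨?_, ?_, hb⟩ <;> linarith)
      (by norm_num [Fin.forall_fin_succ, abs_le])
      (by simp only [Fin.sum_univ_three, Matrix.cons_val]; linarith)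
  have hXq : (X * (1 - X ^ 2) : ℝ[X]) = X - X ^ 3 := by ring
  have hqq : ((1 - X ^ 2) * (1 - X ^ 2) : ℝ[X]) = 1 - (2 : ℝ) • X ^ 2 + X ^ 4 := by
    simp only [Polynomial.smul_eq_C_mul, Polynomial.C_ofNat]
    ring
  have hcs := hpsd.sq_rieszFunctional_mul_le X (1 - X ^ 2)
  rw [hXq, hqq, ← sq X] at hcs
  simpa [hs] using hcs

lemma sq_sub_le_of_abs_sub (H : PreservesAtomicMoments F R) {x y b M : ℝ}
    (hb : 8 * |y - x| = 3 * b) (hx : |x| + b ≤ M) (hM : M + b ≤ R) :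
    (F y - F x) ^ 2 ≤ F (M + b / 4) * (F (M + b) - 2 * F (M + b / 4) + F (M + b / 16)) := by
  have hb₀ : 0 ≤ b := by linarith [abs_nonneg (y - x)]
  have hx' := abs_le.1 (show |x| ≤ M - b by linarith)
  rcases le_total x y with hxy | hyx
  · rw [abs_of_nonneg (by linarith)] at hb
    have hbound := H.sq_sub_le hb₀ (c := x - b / 8) (abs_le.2 (by grind)) hM
    rwa [show x - b / 8 + b / 2 = y by linarith, sub_add_cancel] at hbound
  · rw [abs_of_nonpos (by linarith)] at hb
    have hbound := H.sq_sub_le hb₀ (c := y - b / 8) (abs_le.2 (by grind)) hM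
    rwa [show y - b / 8 + b / 2 = x by linarith, sub_add_cancel, ← neg_sq, neg_sub] at hbound

lemma continuousAt (H : PreservesAtomicMoments F R) {x : ℝ} (hx : |x| < R) :
    ContinuousAt F x := by
  obtain ⟨M, hM, hcont⟩ := exists_continuousAt_of_monotoneOn_Ioo hx
    (H.monotoneOn.mono fun y hy => ⟨(abs_nonneg x).trans hy.1.le, hy.2.le⟩)
  set b : ℝ → ℝ := fun y => 8 / 3 * |y - x| with hb
  have hlim (r : ℝ) : Tendsto (fun y => F (M + b y / r)) (𝓝 x) (𝓝 (F M)) := by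
    have harg : Tendsto (fun y => M + b y / r) (𝓝 x) (𝓝 M) := by
      simpa [b] using (show Continuous fun y => M + b y / r by fun_prop).tendsto x
    exact hcont.tendsto.comp harg
  have hbound : Tendsto
      (fun y => F (M + b y / 4) * (F (M + b y) - 2 * F (M + b y / 4) + F (M + b y / 16)))
      (𝓝 x) (𝓝 0) := by
    have hprod := (hlim 4).mul (((hlim 1).sub ((hlim 4).const_mul 2)).add (hlim 16))
    simp only [div_one] at hprod
    convert hprod using 2
    ring
  have hsmall {m : ℝ} (hm : 0 < m) : ∀ᶠ y in 𝓝 x, b y < m :=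
    ((show Continuous b by fun_prop).tendsto x).eventually_lt_const (by simpa [b] using hm)
  have hsq : Tendsto (fun y => (F y - F x) ^ 2) (𝓝 x) (𝓝 0) := by
    refine squeeze_zero' (.of_forall fun y => sq_nonneg _) ?_ hbound
    filter_upwards [hsmall (sub_pos.2 hM.1), hsmall (sub_pos.2 hM.2)] with y hyx hyR
    exact H.sq_sub_le_of_abs_sub (by simp only [hb]; ring) (by linarith) (by linarith)
  rw [ContinuousAt, ← tendsto_sub_nhds_zero_iff, tendsto_zero_iff_abs_tendsto_zero]
  simpa [Real.sqrt_sq_eq_abs, Function.comp_def] using hsq.sqrt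

end PreservesAtomicMoments

end Continuity

section TaylorCoefficient

/-- The `l`-th Taylor coefficient of `f` at `x`. -/
noncomputable def taylorCoeff (f : ℝ → ℝ) (l : ℕ) (x : ℝ) : ℝ := iteratedDeriv l f x / l.factorial

lemma taylorCoeff_nonneg_iff {f : ℝ → ℝ} {l : ℕ} {x : ℝ} :
    0 ≤ taylorCoeff f l x ↔ 0 ≤ iteratedDeriv l f x := by
  rw [taylorCoeff, le_div_iff₀ (by positivity), zero_mul]

lemma isLittleO_sub_sum_taylorCoeff {f : ℝ → ℝ} {n : ℕ} {x : ℝ} (hf : ContDiffAt ℝ n f x) :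
    (fun h => f (x + h) - ∑ l ∈ Finset.range (n + 1), taylorCoeff f l x * h ^ l) =o[𝓝 0]
      fun h => h ^ n := by
  obtain ⟨u, hu, hfu⟩ := hf.contDiffOn le_rfl (by simp)
  obtain ⟨ε, hε, hball⟩ := Metric.mem_nhds_iff.1 (by simpa using hu)
  have hx := Metric.mem_ball_self (x := x) hε
  have htaylor := taylor_isLittleO (convex_ball x ε) hx (hfu.mono hball)
  rw [Metric.isOpen_ball.nhdsWithin_eq hx] at htaylor
  have hshift : Tendsto (fun h => x + h) (𝓝 0) (𝓝 x) := by
    simpa using (continuous_const_add x).tendsto 0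
  refine (htaylor.comp_tendsto hshift).congr (fun h => ?_) fun h => by simp
  simp only [Function.comp_apply, taylor_within_apply, add_sub_cancel_left, taylorCoeff,
    iteratedDerivWithin_of_isOpen Metric.isOpen_ball hx, smul_eq_mul]
  exact congrArg (_ - ·) (Finset.sum_congr rfl fun l _ => by ring)

variable {f : ℝ → ℝ} {n : ℕ} {x y : ℕ → ℝ}

lemma isLittleO_rieszFunctional_sub_sum_taylorCoeff
    (hf : ∀ k, ContDiffAt ℝ n f (x k)) (y : ℕ → ℝ) (p : ℝ[X]) :
    (fun b : ℝ => rieszFunctional (fun k => f (x k + b * y k)) p -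
      ∑ l ∈ Finset.range (n + 1),
        b ^ l * rieszFunctional (fun k => taylorCoeff f l (x k) * y k ^ l) p) =o[𝓝 0]
      fun b => b ^ n := by
  have hterm (k : ℕ) : (fun b : ℝ => f (x k + b * y k) -
      ∑ l ∈ Finset.range (n + 1), taylorCoeff f l (x k) * (b * y k) ^ l) =o[𝓝 0]
      fun b => b ^ n := by
    have hscale : Tendsto (fun b : ℝ => b * y k) (𝓝 0) (𝓝 0) := by
      simpa using (continuous_mul_const (y k)).tendsto 0
    refine ((isLittleO_sub_sum_taylorCoeff (hf k)).comp_tendsto hscale).trans_isBigO ?_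
    simpa [Function.comp_def, mul_pow, mul_comm] using
      Asymptotics.isBigO_const_mul_self (y k ^ n) (fun b : ℝ => b ^ n) (𝓝 0)
  refine (Asymptotics.IsLittleO.sum fun k (_ : k ∈ p.support) =>
    (hterm k).const_mul_left (p.coeff k)).congr_left fun b => ?_
  simp only [Finset.sum_apply, rieszFunctional_apply, mul_sub, Finset.sum_sub_distrib,
    Finset.mul_sum, mul_pow]
  rw [Finset.sum_comm]
  exact congrArg (_ - ·) (Finset.sum_congr rfl fun l _ => Finset.sum_congr rfl fun k _ => by ring)

lemma rieszFunctional_taylorCoeff_nonneg (hf : ∀ k, ContDiffAt ℝ n f (x k))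
    (hpsd : ∀ᶠ b : ℝ in 𝓝[>] 0, IsPosSemidefSeq fun k => f (x k + b * y k)) {q : ℝ[X]}
    (hq : ∀ l < n, rieszFunctional (fun k => taylorCoeff f l (x k) * y k ^ l) (q * q) = 0) :
    0 ≤ rieszFunctional (fun k => taylorCoeff f n (x k) * y k ^ n) (q * q) := by
  set A := rieszFunctional (fun k => taylorCoeff f n (x k) * y k ^ n) (q * q)
  have hexpand : (fun b : ℝ => rieszFunctional (fun k => f (x k + b * y k)) (q * q) - b ^ n * A)
      =o[𝓝[>] 0] fun b => b ^ n := by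
    refine ((isLittleO_rieszFunctional_sub_sum_taylorCoeff hf y (q * q)).mono
      nhdsWithin_le_nhds).congr_left fun b => ?_
    rw [Finset.sum_range_succ, Finset.sum_eq_zero, zero_add]
    exact fun l hl => by rw [hq l (Finset.mem_range.1 hl), mul_zero]
  have hlim : Tendsto (fun b : ℝ => rieszFunctional (fun k => f (x k + b * y k)) (q * q) / b ^ n)
      (𝓝[>] 0) (𝓝 A) := by
    rw [← zero_add A]
    refine (hexpand.tendsto_div_nhds_zero.add_const A).congr' ?_
    filter_upwards [self_mem_nhdsWithin] with b hb
    have hpow : b ^ n ≠ 0 := pow_ne_zero n (ne_of_gt hb)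
    field_simp
    ring
  refine ge_of_tendsto hlim ?_
  filter_upwards [hpsd, self_mem_nhdsWithin] with b hb hb₀
  exact div_nonneg (hb q) (pow_nonneg (le_of_lt hb₀) n)

end TaylorCoefficient

lemma exists_polynomial_eval_ne_zero_eval_eq_zero (S : Finset ℝ) (x : ℝ) :
    ∃ q : ℝ[X], q.eval x ≠ 0 ∧ ∀ y ∈ S, y ≠ x → q.eval y = 0 := by
  refine ⟨Lagrange.nodal (S.erase x) id, Lagrange.eval_nodal_not_at_node fun y hy => ?_,
    fun y hy hyx => Lagrange.eval_nodal_at_node (v := id) (Finset.mem_erase.2 ⟨hyx, hy⟩)⟩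
  exact (Finset.ne_of_mem_erase hy).symm

namespace PreservesAtomicMoments

variable {f : ℝ → ℝ} {R a : ℝ} {n : ℕ}

/- Expand `f (a * (-1) ^ k + b * 2⁻¹ ^ k)` at `b = 0`: the `l`-th coefficient is carried by the
nodes `±2⁻¹ ^ l`, so a polynomial vanishing at those with `l < n` isolates the `n`-th one. -/
lemma taylorCoeff_combination_nonneg (H : PreservesAtomicMoments f R) (ha : 0 ≤ a) (haR : a < R)
    (hf : ContDiffAt ℝ n f a) (hf_neg : ContDiffAt ℝ n f (-a)) {q : ℝ[X]}
    (hq : ∀ l < n, q.eval (2⁻¹ ^ l) = 0 ∧ q.eval (-2⁻¹ ^ l) = 0) :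
    0 ≤ (taylorCoeff f n a + taylorCoeff f n (-a)) * q.eval (2⁻¹ ^ n) ^ 2 +
      (taylorCoeff f n a - taylorCoeff f n (-a)) * q.eval (-2⁻¹ ^ n) ^ 2 := by
  have hsmooth (k : ℕ) : ContDiffAt ℝ n f (a * (-1) ^ k) := by
    rcases neg_one_pow_eq_or ℝ k with hk | hk <;> simpa [hk]
  have hpsd : ∀ᶠ b : ℝ in 𝓝[>] 0, IsPosSemidefSeq fun k => f (a * (-1) ^ k + b * 2⁻¹ ^ k) := by
    filter_upwards [Ioo_mem_nhdsGT (sub_pos.2 haR)] with b hb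
    simpa [atomicMoment] using H ![a, b] ![-1, 2⁻¹] (by simp [Fin.forall_fin_two, ha, hb.1.le])
      (by norm_num [Fin.forall_fin_two, abs_le]) (by simpa using by linarith [hb.2])
  have hriesz (l : ℕ) :
      rieszFunctional (fun k => taylorCoeff f l (a * (-1) ^ k) * (2⁻¹ ^ k) ^ l) (q * q) =
        (taylorCoeff f l a + taylorCoeff f l (-a)) / 2 * q.eval (2⁻¹ ^ l) ^ 2 +
          (taylorCoeff f l a - taylorCoeff f l (-a)) / 2 * q.eval (-2⁻¹ ^ l) ^ 2 := by
    simp only [pow_right_comm _ _ l, apply_mul_neg_one_pow_mul_pow_eq_atomicMoment,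
      rieszFunctional_atomicMoment, Fin.sum_univ_two, Polynomial.eval_pow, ← sq,
      Matrix.cons_val]
  have hn := rieszFunctional_taylorCoeff_nonneg hsmooth hpsd (q := q) fun l hl => by
    rw [hriesz, (hq l hl).1, (hq l hl).2]
    ring
  rw [hriesz] at hn
  linarith

lemma abs_taylorCoeff_neg_le (H : PreservesAtomicMoments f R) (ha : 0 ≤ a) (haR : a < R)
    (hf : ContDiffAt ℝ n f a) (hf_neg : ContDiffAt ℝ n f (-a)) :
    |taylorCoeff f n (-a)| ≤ taylorCoeff f n a := by
  have hpow (l : ℕ) : (0 : ℝ) < 2⁻¹ ^ l := by positivity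
  have hinj {l m : ℕ} (hlm : l < m) : (2⁻¹ : ℝ) ^ l ≠ 2⁻¹ ^ m :=
    (pow_lt_pow_right_of_lt_one₀ (by norm_num) (by norm_num) hlm).ne'
  set nodes : Finset ℝ := (Finset.range (n + 1)).image (2⁻¹ ^ ·) ∪
    (Finset.range (n + 1)).image (-2⁻¹ ^ ·)
  have hpos : ∀ l ≤ n, 2⁻¹ ^ l ∈ nodes := by grind
  have hneg : ∀ l ≤ n, -2⁻¹ ^ l ∈ nodes := by grind
  obtain ⟨p, hp, hp₀⟩ := exists_polynomial_eval_ne_zero_eval_eq_zero nodes (2⁻¹ ^ n)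
  obtain ⟨q, hq, hq₀⟩ := exists_polynomial_eval_ne_zero_eval_eq_zero nodes (-2⁻¹ ^ n)
  have hplus := H.taylorCoeff_combination_nonneg ha haR hf hf_neg (q := p) fun l hl =>
    ⟨hp₀ _ (hpos l hl.le) (hinj hl), hp₀ _ (hneg l hl.le) (by grind)⟩
  have hminus := H.taylorCoeff_combination_nonneg ha haR hf hf_neg (q := q) fun l hl =>
    ⟨hq₀ _ (hpos l hl.le) (by grind), hq₀ _ (hneg l hl.le) (by grind)⟩
  rw [hp₀ _ (hneg n le_rfl) (by grind)] at hplus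
  rw [hq₀ _ (hpos n le_rfl) (by grind)] at hminus
  have hadd : 0 ≤ taylorCoeff f n a + taylorCoeff f n (-a) :=
    nonneg_of_mul_nonneg_left (by simpa using hplus) (sq_pos_of_ne_zero hp)
  have hsub : 0 ≤ taylorCoeff f n a - taylorCoeff f n (-a) :=
    nonneg_of_mul_nonneg_left (by simpa using hminus) (sq_pos_of_ne_zero hq)
  exact abs_le.2 ⟨by linarith, by linarith⟩

end PreservesAtomicMoments

section PowerSeries

variable {f : ℝ → ℝ}

lemma hasFPowerSeriesOnBall_ofScalars_of_hasSum {c : ℕ → ℝ} {x r : ℝ} (hr : 0 < r)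
    (hsum : ∀ h, |h| < r → HasSum (fun k => c k * h ^ k) (f (x + h))) :
    HasFPowerSeriesOnBall f (FormalMultilinearSeries.ofScalars ℝ c) x (ENNReal.ofReal r) := by
  refine ⟨ENNReal.le_of_forall_nnreal_lt fun h hhr => ?_, by simpa, fun {h} hh => ?_⟩
  · have hlt : |(h : ℝ)| < r := by
      rwa [NNReal.abs_eq, ← ENNReal.ofReal_lt_ofReal_iff hr, ENNReal.ofReal_coe_nnreal]
    refine FormalMultilinearSeries.le_radius_of_summable _ ?_
    simpa [FormalMultilinearSeries.ofScalars_norm, abs_mul] using (hsum h hlt).summable.abs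
  · rw [Metric.eball_ofReal, mem_ball_zero_iff, Real.norm_eq_abs] at hh
    simpa [FormalMultilinearSeries.ofScalars_apply_eq, mul_comm] using hsum h hh

lemma exists_sub_sum_taylorCoeff_eq {x y : ℝ} (hf : ∀ t ∈ uIcc x y, ContDiffAt ℝ ∞ f t) (n : ℕ) :
    ∃ t ∈ uIcc x y, f y - ∑ l ∈ Finset.range n, taylorCoeff f l x * (y - x) ^ l =
      taylorCoeff f n t * (y - x) ^ n := by
  rcases n with _ | n
  · exact ⟨y, right_mem_uIcc, by simp [taylorCoeff]⟩
  rcases eq_or_ne x y with rfl | hxy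
  · exact ⟨x, left_mem_uIcc, by simp [Finset.sum_range_succ', taylorCoeff]⟩
  obtain ⟨t, ht, hremainder⟩ := taylor_mean_remainder_lagrange_iteratedDeriv (n := n) hxy
    fun t ht => ((hf t ht).of_le (mod_cast le_top)).contDiffWithinAt
  refine ⟨t, uIoo_subset_uIcc_self ht, ?_⟩
  rw [taylorCoeff, div_mul_eq_mul_div, ← hremainder, taylor_within_apply]
  refine congrArg (f y - ·) (Finset.sum_congr rfl fun l _ => ?_)
  rw [iteratedDerivWithin_eq_iteratedDeriv (uniqueDiffOn_uIcc hxy)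
    ((hf x left_mem_uIcc).of_le (mod_cast le_top)) left_mem_uIcc, taylorCoeff, smul_eq_mul]
  ring

lemma hasSum_taylorCoeff_of_abs_mul_pow_le {x r C : ℝ} (hf : ∀ t, |t - x| < r → ContDiffAt ℝ ∞ f t)
    (hbound : ∀ n t, |t - x| < r → |taylorCoeff f n t| * r ^ n ≤ C) {h : ℝ} (hh : |h| < r) :
    HasSum (fun k => taylorCoeff f k x * h ^ k) (f (x + h)) := by
  have hr : 0 < r := (abs_nonneg h).trans_lt hh
  have hterm (n : ℕ) {t : ℝ} (ht : |t - x| < r) :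
      ‖taylorCoeff f n t * h ^ n‖ ≤ C * (|h| / r) ^ n := by
    rw [Real.norm_eq_abs, abs_mul, abs_pow, div_pow, ← mul_div_assoc, le_div_iff₀ (by positivity),
      mul_right_comm]
    exact mul_le_mul_of_nonneg_right (hbound n t ht) (by positivity)
  have hgeom : Summable fun n => C * (|h| / r) ^ n :=
    (summable_geometric_of_lt_one (by positivity) ((div_lt_one hr).2 hh)).mul_left C
  have hsummable : Summable fun k => taylorCoeff f k x * h ^ k :=
    .of_norm_bounded hgeom fun k => hterm k (by simpa)
  have hball {t : ℝ} (ht : t ∈ uIcc x (x + h)) : |t - x| < r := by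
    have hdist := abs_sub_left_of_mem_uIcc ht
    rw [add_sub_cancel_left] at hdist
    exact hdist.trans_lt hh
  rw [hsummable.hasSum_iff_tendsto_nat, ← tendsto_sub_nhds_zero_iff]
  refine squeeze_zero_norm (fun n => ?_) hgeom.tendsto_atTop_zero
  obtain ⟨t, ht, hremainder⟩ := exists_sub_sum_taylorCoeff_eq (fun t ht => hf t (hball ht)) n
  simp only [add_sub_cancel_left] at hremainder
  rw [norm_sub_rev, hremainder]
  exact hterm n (hball ht)

lemma taylorCoeff_mul_sub_pow_le {a y : ℝ} (hay : a ≤ y) (hf : ∀ t ∈ Icc a y, ContDiffAt ℝ ∞ f t)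
    (hnonneg : ∀ n, ∀ t ∈ Icc a y, 0 ≤ taylorCoeff f n t) (n : ℕ) :
    taylorCoeff f n a * (y - a) ^ n ≤ f y := by
  have hterm (l : ℕ) {t : ℝ} (ht : t ∈ Icc a y) : 0 ≤ taylorCoeff f l t * (y - a) ^ l :=
    mul_nonneg (hnonneg l t ht) (pow_nonneg (sub_nonneg.2 hay) l)
  rw [← uIcc_of_le hay] at hf
  obtain ⟨t, ht, hremainder⟩ := exists_sub_sum_taylorCoeff_eq hf (n + 1)
  rw [uIcc_of_le hay] at ht
  calc taylorCoeff f n a * (y - a) ^ n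
    _ ≤ ∑ l ∈ Finset.range (n + 1), taylorCoeff f l a * (y - a) ^ l :=
      Finset.single_le_sum (fun l _ => hterm l (left_mem_Icc.2 hay)) (Finset.self_mem_range_succ n)
    _ ≤ f y := by linarith [hterm (n + 1) ht]

lemma hasSum_taylorCoeff_of_nonneg {R : ℝ} (hf : AnalyticOnNhd ℝ f (Ioo (-R) R))
    (hnonneg : ∀ n, ∀ t ∈ Ico 0 R, 0 ≤ taylorCoeff f n t) {x : ℝ} (hx : |x| < R) :
    HasSum (fun k => taylorCoeff f k 0 * x ^ k) (f x) := by
  obtain ⟨y, hxy, hyR⟩ := exists_between hx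
  have hy : 0 < y := (abs_nonneg x).trans_lt hxy
  have hradius :
      ENNReal.ofReal y ≤ (FormalMultilinearSeries.ofScalars ℝ (taylorCoeff f · 0)).radius := by
    refine FormalMultilinearSeries.le_radius_of_bound _ (f y) fun n => ?_
    rw [FormalMultilinearSeries.ofScalars_norm,
      Real.norm_of_nonneg (hnonneg n 0 ⟨le_rfl, hy.trans hyR⟩), Real.coe_toNNReal y hy.le]
    simpa using taylorCoeff_mul_sub_pow_le hy.le
      (fun t ht => (hf t ⟨by linarith [ht.1], ht.2.trans_lt hyR⟩).contDiffAt)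
      (fun n t ht => hnonneg n t ⟨ht.1, ht.2.trans_lt hyR⟩) n
  have hanalytic : AnalyticOn ℝ f (Metric.eball 0 (ENNReal.ofReal y)) := by
    rw [Metric.eball_ofReal, Real.ball_eq_Ioo]
    exact (hf.mono (Ioo_subset_Ioo (by linarith) (by linarith))).analyticOn
  have hseries := AnalyticOn.hasFPowerSeriesOnSubball (by simpa) hanalytic hradius
  have hmem : x ∈ Metric.eball 0 (ENNReal.ofReal y) := by
    rwa [Metric.eball_ofReal, mem_ball_zero_iff]
  simpa [FormalMultilinearSeries.ofScalars_apply_eq, taylorCoeff, mul_comm] using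
    hseries.hasSum hmem

end PowerSeries

namespace PreservesAtomicMoments

variable {f : ℝ → ℝ} {R : ℝ}

lemma abs_taylorCoeff_le (H : PreservesAtomicMoments f R)
    (hf : ∀ x ∈ Ioo (-R) R, ContDiffAt ℝ ∞ f x) (n : ℕ) {x : ℝ} (hx : |x| < R) :
    |taylorCoeff f n x| ≤ taylorCoeff f n |x| := by
  have hsmooth {y : ℝ} (hy : |y| < R) : ContDiffAt ℝ n f y :=
    (hf y (abs_lt.1 hy)).of_le (mod_cast le_top)
  have hneg : |taylorCoeff f n (-|x|)| ≤ taylorCoeff f n |x| :=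
    H.abs_taylorCoeff_neg_le (abs_nonneg x) hx (hsmooth (by simpa)) (hsmooth (by simpa))
  rcases abs_cases x with ⟨habs, -⟩ | ⟨habs, -⟩ <;> rw [habs] at hneg ⊢
  · exact (abs_of_nonneg ((abs_nonneg _).trans hneg)).le
  · rwa [neg_neg] at hneg

lemma taylorCoeff_nonneg (H : PreservesAtomicMoments f R)
    (hf : ∀ x ∈ Ioo (-R) R, ContDiffAt ℝ ∞ f x) (n : ℕ) {x : ℝ} (hx : x ∈ Ico 0 R) :
    0 ≤ taylorCoeff f n x := by
  have habs : |x| = x := abs_of_nonneg hx.1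
  simpa only [habs] using (abs_nonneg _).trans (H.abs_taylorCoeff_le hf n (habs.trans_lt hx.2))

lemma analyticOnNhd_of_contDiffAt (H : PreservesAtomicMoments f R)
    (hf : ∀ x ∈ Ioo (-R) R, ContDiffAt ℝ ∞ f x) : AnalyticOnNhd ℝ f (Ioo (-R) R) := by
  intro x hx
  obtain ⟨y, hxy, hyR⟩ := exists_between (abs_lt.2 hx)
  set r := (y - |x|) / 2 with hr
  have hr₀ : 0 < r := by linarith
  have habs {t : ℝ} (ht : |t - x| < r) : |t| + r ≤ y := by
    linarith [abs_sub_abs_le_abs_sub t x]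
  have hbound (n : ℕ) (t : ℝ) (ht : |t - x| < r) : |taylorCoeff f n t| * r ^ n ≤ f y := by
    have hty := habs ht
    have hIco {s : ℝ} (hs : s ∈ Icc |t| y) : s ∈ Ico 0 R :=
      ⟨(abs_nonneg t).trans hs.1, hs.2.trans_lt hyR⟩
    calc |taylorCoeff f n t| * r ^ n
      _ ≤ taylorCoeff f n |t| * (y - |t|) ^ n := by
        gcongr
        · exact (abs_nonneg _).trans (H.abs_taylorCoeff_le hf n (by linarith))
        · exact H.abs_taylorCoeff_le hf n (by linarith)
        · linarith
      _ ≤ f y := taylorCoeff_mul_sub_pow_le (by linarith)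
        (fun s hs => hf s ⟨by linarith [(hIco hs).1, (hIco hs).2], (hIco hs).2⟩)
        (fun n s hs => H.taylorCoeff_nonneg hf n (hIco hs)) n
  have hsmooth (t : ℝ) (ht : |t - x| < r) : ContDiffAt ℝ ∞ f t :=
    hf t (abs_lt.1 (by linarith [habs ht]))
  exact (hasFPowerSeriesOnBall_ofScalars_of_hasSum hr₀ fun h hh =>
    hasSum_taylorCoeff_of_abs_mul_pow_le hsmooth hbound hh).analyticAt

lemma hasSum_taylorCoeff_of_contDiffAt (H : PreservesAtomicMoments f R)
    (hf : ∀ x ∈ Ioo (-R) R, ContDiffAt ℝ ∞ f x) {x : ℝ} (hx : |x| < R) :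
    HasSum (fun k => taylorCoeff f k 0 * x ^ k) (f x) :=
  hasSum_taylorCoeff_of_nonneg (H.analyticOnNhd_of_contDiffAt hf)
    (fun n _ => H.taylorCoeff_nonneg hf n) hx

end PreservesAtomicMoments

lemma abs_coeff_mul_pow_le_of_hasSum {c : ℕ → ℝ} {r x M S : ℝ} (hr : 0 < r) (hc : ∀ k, 0 ≤ c k)
    (hsum : HasSum (fun k => c k * r ^ k) S) (hSM : S ≤ M) (k : ℕ) :
    |c k * x ^ k| ≤ M * (|x| / r) ^ k := by
  have hterm : c k * r ^ k ≤ M :=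
    (le_hasSum hsum k fun j _ => mul_nonneg (hc j) (by positivity)).trans hSM
  rw [abs_mul, abs_of_nonneg (hc k), abs_pow, div_pow, ← mul_div_assoc, le_div_iff₀ (by positivity),
    mul_right_comm]
  exact mul_le_mul_of_nonneg_right hterm (by positivity)

/- The coefficients lie in a compact product of intervals, so a subsequence of them converges. -/
lemma exists_hasSum_of_tendsto_of_hasSum {F : ℝ → ℝ} {f : ℕ → ℝ → ℝ} {c : ℕ → ℕ → ℝ} {r : ℝ}
    (hr : 0 < r) (hc : ∀ m k, 0 ≤ c m k)
    (hsum : ∀ m x, |x| ≤ r → HasSum (fun k => c m k * x ^ k) (f m x))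
    (hlim : ∀ x, |x| ≤ r → Tendsto (fun m => f m x) atTop (𝓝 (F x))) :
    ∃ d : ℕ → ℝ, ∀ x, |x| < r → HasSum (fun k => d k * x ^ k) (F x) := by
  have hr_mem : |r| ≤ r := (abs_of_pos hr).le
  obtain ⟨M, hM⟩ := (hlim r hr_mem).bddAbove_range
  have hterm (x : ℝ) (m k : ℕ) : |c m k * x ^ k| ≤ M * (|x| / r) ^ k :=
    abs_coeff_mul_pow_le_of_hasSum hr (hc m) (hsum m r hr_mem) (hM (mem_range_self m)) k
  have hcoeff (m k : ℕ) : c m k ∈ Icc 0 (M / r ^ k) := by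
    refine ⟨hc m k, ?_⟩
    simpa [abs_of_nonneg (hc m k), div_eq_mul_inv] using hterm 1 m k
  obtain ⟨d, -, ψ, hψ, hd⟩ :=
    (isCompact_univ_pi fun k : ℕ => isCompact_Icc (a := (0 : ℝ)) (b := M / r ^ k)).tendsto_subseq
      (x := c) fun m k _ => hcoeff m k
  refine ⟨d, fun x hx => ?_⟩
  have hgeom : Summable fun k => M * (|x| / r) ^ k :=
    (summable_geometric_of_lt_one (by positivity) ((div_lt_one hr).2 hx)).mul_left M
  have hd_term (k : ℕ) : Tendsto (fun m => c (ψ m) k * x ^ k) atTop (𝓝 (d k * x ^ k)) :=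
    (((continuous_apply k).tendsto d).comp hd).mul_const _
  have hd_summable : Summable fun k => d k * x ^ k :=
    .of_norm_bounded hgeom fun k => le_of_tendsto' (hd_term k).norm fun m => hterm x (ψ m) k
  have htsum : Tendsto (fun m => f (ψ m) x) atTop (𝓝 (∑' k, d k * x ^ k)) :=
    (tendsto_tsum_of_dominated_convergence hgeom hd_term
      (.of_forall fun m k => hterm x (ψ m) k)).congr fun m => (hsum (ψ m) x hx.le).tsum_eq
  rw [tendsto_nhds_unique ((hlim x hx.le).comp hψ.tendsto_atTop) htsum]
  exact hd_summable.hasSum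

section Mollification

/-- The average of `F` over `[x, x + 2 * φ.rOut]` weighted by the bump `φ`. Averaging to the right
only keeps the class `PreservesAtomicMoments` stable, since it consists of the translations
`F (· + c)` with `0 ≤ c`. -/
noncomputable def mollifyRight (φ : ContDiffBump (0 : ℝ)) (F : ℝ → ℝ) (x : ℝ) : ℝ :=
  (φ.normed volume ⋆[ContinuousLinearMap.lsmul ℝ ℝ, volume] F) (x + φ.rOut)

variable {F : ℝ → ℝ} (φ : ContDiffBump (0 : ℝ))

lemma contDiff_mollifyRight (hF : Continuous F) : ContDiff ℝ ∞ (mollifyRight φ F) :=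
  (φ.hasCompactSupport_normed.contDiff_convolution_left _ φ.contDiff_normed
    hF.locallyIntegrable).comp (contDiff_id.add contDiff_const)

lemma preservesAtomicMoments_mollifyRight {R : ℝ} (H : PreservesAtomicMoments F R)
    (hF : Continuous F) : PreservesAtomicMoments (mollifyRight φ F) (R - 2 * φ.rOut) := by
  intro n w t hw ht hmass
  simp only [mollifyRight, convolution_lsmul, smul_eq_mul, add_sub_assoc]
  refine isPosSemidefSeq_integral (fun k => ?_) (.of_forall fun u => ?_)
  · exact Continuous.integrable_of_hasCompactSupport (φ.continuous_normed.mul (by fun_prop))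
      φ.hasCompactSupport_normed.mul_right
  by_cases hu : u ∈ Function.support (φ.normed volume)
  · rw [φ.support_normed_eq, mem_ball_zero_iff, Real.norm_eq_abs, abs_lt] at hu
    exact ((H.comp_add_const (by linarith)).mono (by linarith) w t hw ht hmass).const_mul
      (φ.nonneg_normed u)
  · intro p
    simp [Function.notMem_support.1 hu, rieszFunctional_apply]

lemma tendsto_mollifyRight {φ : ℕ → ContDiffBump (0 : ℝ)} (hF : Continuous F)
    (hφ : Tendsto (fun m => (φ m).rOut) atTop (𝓝 0)) (x : ℝ) :
    Tendsto (fun m => mollifyRight (φ m) F x) atTop (𝓝 (F x)) :=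
  ContDiffBump.convolution_tendsto_right (g := fun _ => F) (k := fun m => x + (φ m).rOut) hφ
    (.of_forall fun _ => hF.aestronglyMeasurable) ((hF.tendsto x).comp tendsto_snd)
    (by simpa using tendsto_const_nhds.add hφ)

end Mollification

namespace PreservesAtomicMoments

variable {F : ℝ → ℝ} {R r : ℝ}

lemma exists_hasSum_of_continuous (H : PreservesAtomicMoments F R) (hF : Continuous F)
    (hr : 0 < r) (hrR : r < R) :
    ∃ c : ℕ → ℝ, ∀ x, |x| < r → HasSum (fun k => c k * x ^ k) (F x) := by
  obtain ⟨ε, -, hε, hε_lim⟩ :=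
    exists_seq_strictAnti_tendsto' (show 0 < (R - r) / 2 by linarith)
  let φ (m : ℕ) : ContDiffBump (0 : ℝ) :=
    ⟨ε m / 2, ε m, half_pos (hε m).1, half_lt_self (hε m).1⟩
  have hsmooth (m : ℕ) (x : ℝ) : ContDiffAt ℝ ∞ (mollifyRight (φ m) F) x :=
    (contDiff_mollifyRight (φ m) hF).contDiffAt
  have hpres (m : ℕ) := preservesAtomicMoments_mollifyRight (φ m) H hF
  have hradius (m : ℕ) : r < R - 2 * (φ m).rOut := by linarith [(hε m).2]
  exact exists_hasSum_of_tendsto_of_hasSum hr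
    (fun m k => (hpres m).taylorCoeff_nonneg (fun x _ => hsmooth m x) k
      ⟨le_rfl, hr.trans (hradius m)⟩)
    (fun m x hx => (hpres m).hasSum_taylorCoeff_of_contDiffAt (fun x _ => hsmooth m x)
      (hx.trans_lt (hradius m)))
    fun x _ => tendsto_mollifyRight hF hε_lim x

lemma analyticOnNhd (H : PreservesAtomicMoments F R) : AnalyticOnNhd ℝ F (Ioo (-R) R) := by
  intro x hx
  obtain ⟨w, hxw, hwR⟩ := exists_between (abs_lt.2 hx)
  obtain ⟨r, hxr, hrw⟩ := exists_between hxw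
  have hr : 0 < r := (abs_nonneg x).trans_lt hxr
  have hw : -w ≤ w := by linarith
  set G := IccExtend hw (F ∘ (↑) : Icc (-w) w → ℝ)
  have hFG : EqOn F G (Icc (-w) w) := fun y hy => (IccExtend_of_mem hw (F ∘ (↑)) hy).symm
  have hG : Continuous G := continuous_IccExtend_iff.2 <| continuous_iff_continuousAt.2 fun y =>
    (H.continuousAt ((abs_le.2 y.2).trans_lt hwR)).comp continuous_subtype_val.continuousAt
  obtain ⟨c, hc⟩ := ((H.mono hwR.le).congr hFG).exists_hasSum_of_continuous hG hr hrw
  have hseries : HasFPowerSeriesOnBall F (.ofScalars ℝ c) 0 (ENNReal.ofReal r) := by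
    refine hasFPowerSeriesOnBall_ofScalars_of_hasSum hr fun h hh => ?_
    rw [zero_add, hFG (abs_le.1 (hh.trans hrw).le)]
    exact hc h hh
  exact hseries.analyticAt_of_mem (by rwa [Metric.eball_ofReal, mem_ball_zero_iff])

lemma exists_tendsto_nhdsLT_le (H : PreservesAtomicMoments F R) (hR : 0 < R) :
    ∃ L, Tendsto F (𝓝[<] R) (𝓝 L) ∧ L ≤ F R := by
  have hne : (Ioo 0 R).Nonempty := nonempty_Ioo.2 hR
  have hle : F R ∈ upperBounds (F '' Ioo 0 R) := by
    rintro _ ⟨x, hx, rfl⟩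
    exact H.monotoneOn (Ioo_subset_Icc_self hx) (right_mem_Icc.2 hR.le) hx.2.le
  exact ⟨sSup (F '' Ioo 0 R),
    (H.monotoneOn.mono Ioo_subset_Icc_self).tendsto_nhdsWithin_Ioo_left hne ⟨F R, hle⟩,
    csSup_le (hne.image F) hle⟩

lemma iteratedDerivWithin_nonneg (H : PreservesAtomicMoments F R) (k : ℕ) {x : ℝ}
    (hx : x ∈ Ioo 0 R) : 0 ≤ iteratedDerivWithin k F (Ioo 0 R) x := by
  rw [iteratedDerivWithin_of_isOpen isOpen_Ioo hx, ← taylorCoeff_nonneg_iff]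
  exact H.taylorCoeff_nonneg (fun y hy => (H.analyticOnNhd y hy).contDiffAt) k ⟨hx.1.le, hx.2⟩

end PreservesAtomicMoments

section EntrywisePreservation

variable {ι : Type*} [Finite ι] {A : Matrix ι ι ℝ}

lemma posSemidef_of_tendsto {α : Type*} {l : Filter α} [l.NeBot] {B : α → Matrix ι ι ℝ}
    (hB : ∀ᶠ a in l, (B a).PosSemidef)
    (hlim : ∀ i j, Tendsto (fun a => B a i j) l (𝓝 (A i j))) : A.PosSemidef := by
  have := Fintype.ofFinite ι
  refine Matrix.PosSemidef.of_dotProduct_mulVec_nonneg ?_ fun v => ?_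
  · ext i j
    refine tendsto_nhds_unique_of_eventuallyEq (hlim j i) (hlim i j) ?_
    filter_upwards [hB] with a ha using ha.isHermitian.apply i j
  · have hquad : Tendsto (fun a => star v ⬝ᵥ (B a).mulVec v) l (𝓝 (star v ⬝ᵥ A.mulVec v)) :=
      tendsto_finsetSum _ fun i _ => (tendsto_finsetSum _ fun j _ =>
        (hlim i j).mul_const _).const_mul _
    exact ge_of_tendsto hquad (hB.mono fun a ha => ha.dotProduct_mulVec_nonneg v)

lemma posSemidef_map_pow (hA : A.PosSemidef) (k : ℕ) : (A.map (· ^ k)).PosSemidef := by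
  induction k with
  | zero =>
    have hzero : A.map (· ^ 0) = Matrix.vecMulVec 1 (star 1) := by
      ext i j
      simp [Matrix.vecMulVec_apply]
    exact hzero ▸ Matrix.posSemidef_vecMulVec_self_star 1
  | succ k ih =>
    have hsucc : A.map (· ^ (k + 1)) = (A.map (· ^ k)).hadamard A := by
      ext i j
      simp [pow_succ]
    exact hsucc ▸ ih.hadamard hA

lemma posSemidef_map_of_hasSum {F : ℝ → ℝ} {c : ℕ → ℝ} (hA : A.PosSemidef) (hc : ∀ k, 0 ≤ c k)
    (hF : ∀ i j, HasSum (fun k => c k * A i j ^ k) (F (A i j))) : (A.map F).PosSemidef := by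
  refine posSemidef_of_tendsto (l := atTop)
    (B := fun n => ∑ k ∈ Finset.range n, c k • A.map (· ^ k))
    (.of_forall fun n => ?_) fun i j => ?_
  · exact Matrix.posSemidef_sum _ fun k _ => (posSemidef_map_pow hA k).smul (hc k)
  · simpa [Matrix.sum_apply] using (hF i j).tendsto_sum_nat

variable {ρ : ℝ}

/- The powers of `x / ρ` tend to the indicator of `{ρ}` on `(-ρ, ρ]`. -/
lemma posSemidef_map_indicator_singleton (hρ : 0 < ρ) (hA : A.PosSemidef)
    (hAρ : ∀ i j, A i j ∈ Ioc (-ρ) ρ) : (A.map (indicator {ρ} (1 : ℝ → ℝ))).PosSemidef := by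
  refine posSemidef_of_tendsto (l := atTop) (B := fun k => (ρ⁻¹ • A).map (· ^ k))
    (.of_forall fun k => posSemidef_map_pow (hA.smul (inv_pos.2 hρ).le) k) fun i j => ?_
  simp only [Matrix.map_apply, Matrix.smul_apply, smul_eq_mul]
  rcases (hAρ i j).2.eq_or_lt with heq | hlt
  · simp [heq, hρ.ne']
  · rw [indicator_of_notMem (by simpa using hlt.ne)]
    refine tendsto_pow_atTop_nhds_zero_of_abs_lt_one ?_
    rw [abs_mul, abs_of_pos (inv_pos.2 hρ), inv_mul_lt_one₀ hρ]
    exact abs_lt.2 ⟨(hAρ i j).1, hlt⟩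

lemma posSemidef_map_update {F : ℝ → ℝ} {L : ℝ}
    (hF : ∀ B : Matrix ι ι ℝ, B.PosSemidef → (∀ i j, B i j ∈ Ioo (-ρ) ρ) → (B.map F).PosSemidef)
    (hcont : ContinuousOn F (Ioo (-ρ) ρ)) (hL : Tendsto F (𝓝[<] ρ) (𝓝 L)) (hρ : 0 < ρ)
    (hA : A.PosSemidef) (hAρ : ∀ i j, A i j ∈ Ioc (-ρ) ρ) :
    (A.map (Function.update F ρ L)).PosSemidef := by
  refine posSemidef_of_tendsto (l := 𝓝[<] (1 : ℝ)) (B := fun t => (t • A).map F) ?_ fun i j => ?_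
  · filter_upwards [Ioo_mem_nhdsLT zero_lt_one] with t ht
    refine hF _ (hA.smul ht.1.le) fun i j => abs_lt.1 ?_
    rw [Matrix.smul_apply, smul_eq_mul, abs_mul, abs_of_pos ht.1]
    calc t * |A i j| ≤ t * ρ :=
          mul_le_mul_of_nonneg_left (abs_le.2 ⟨(hAρ i j).1.le, (hAρ i j).2⟩) ht.1.le
      _ < ρ := mul_lt_of_lt_one_left hρ ht.2
  · have hscale : Tendsto (fun t : ℝ => t * A i j) (𝓝[<] 1) (𝓝 (A i j)) := by
      simpa using ((continuous_mul_const (A i j)).tendsto 1).mono_left nhdsWithin_le_nhds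
    simp only [Matrix.map_apply, Matrix.smul_apply, smul_eq_mul]
    rcases (hAρ i j).2.eq_or_lt with heq | hlt
    · rw [heq] at hscale ⊢
      rw [Function.update_self]
      refine hL.comp (tendsto_nhdsWithin_iff.2 ⟨hscale, ?_⟩)
      filter_upwards [self_mem_nhdsWithin] with t ht
      exact mul_lt_of_lt_one_left hρ ht
    · rw [Function.update_of_ne hlt.ne]
      exact (hcont.continuousAt (Ioo_mem_nhds (hAρ i j).1 hlt)).tendsto.comp hscale

lemma posSemidef_map_of_forall_mem_Ioc {F : ℝ → ℝ} {L : ℝ}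
    (hF : ∀ B : Matrix ι ι ℝ, B.PosSemidef → (∀ i j, B i j ∈ Ioo (-ρ) ρ) → (B.map F).PosSemidef)
    (hcont : ContinuousOn F (Ioo (-ρ) ρ)) (hL : Tendsto F (𝓝[<] ρ) (𝓝 L)) (hLF : L ≤ F ρ)
    (hρ : 0 < ρ) (hA : A.PosSemidef) (hAρ : ∀ i j, A i j ∈ Ioc (-ρ) ρ) :
    (A.map F).PosSemidef := by
  have hsplit : A.map F = A.map (Function.update F ρ L) +
      (F ρ - L) • A.map (indicator {ρ} (1 : ℝ → ℝ)) := by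
    ext i j
    by_cases hij : A i j = ρ <;> simp [hij]
  rw [hsplit]
  exact (posSemidef_map_update hF hcont hL hρ hA hAρ).add
    ((posSemidef_map_indicator_singleton hρ hA hAρ).smul (sub_nonneg.2 hLF))

end EntrywisePreservation

section AbsolutelyMonotone

variable {F : ℝ → ℝ} {ρ : ℝ}

lemma taylorCoeff_nonneg_of_iteratedDerivWithin_Ioo_nonneg
    (hF : AnalyticOnNhd ℝ F (Ioo (-ρ) ρ))
    (hmono : ∀ k, ∀ x ∈ Ioo 0 ρ, 0 ≤ iteratedDerivWithin k F (Ioo 0 ρ) x) (k : ℕ) {x : ℝ}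
    (hx : x ∈ Ico 0 ρ) : 0 ≤ taylorCoeff F k x := by
  rw [taylorCoeff_nonneg_iff]
  have hcont : ContinuousAt (iteratedDeriv k F) x := by
    simpa only [iteratedDeriv_eq_iterate] using
      (hF.iterated_deriv k x ⟨by linarith [hx.1, hx.2], hx.2⟩).continuousAt
  refine ge_of_tendsto (hcont.tendsto.mono_left (nhdsWithin_le_nhds (s := Ioi x))) ?_
  filter_upwards [Ioo_mem_nhdsGT hx.2] with y hy
  have hy₀ : y ∈ Ioo 0 ρ := ⟨hx.1.trans_lt hy.1, hy.2⟩
  rw [← iteratedDerivWithin_of_isOpen isOpen_Ioo hy₀]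
  exact hmono k y hy₀

lemma posSemidef_map_of_absolutelyMonotone {ι : Type*} [Finite ι] {A : Matrix ι ι ℝ} (hρ : 0 < ρ)
    (hF : AnalyticOnNhd ℝ F (Ioo (-ρ) ρ))
    (hmono : ∀ k, ∀ x ∈ Ioo 0 ρ, 0 ≤ iteratedDerivWithin k F (Ioo 0 ρ) x)
    (hA : A.PosSemidef) (hAρ : ∀ i j, A i j ∈ Ioo (-ρ) ρ) : (A.map F).PosSemidef := by
  have hnonneg (k : ℕ) (x : ℝ) (hx : x ∈ Ico 0 ρ) : 0 ≤ taylorCoeff F k x :=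
    taylorCoeff_nonneg_of_iteratedDerivWithin_Ioo_nonneg hF hmono k hx
  exact posSemidef_map_of_hasSum hA (fun k => hnonneg k 0 ⟨le_rfl, hρ⟩)
    fun i j => hasSum_taylorCoeff_of_nonneg hF hnonneg (abs_lt.2 (hAρ i j))

end AbsolutelyMonotone

section Hankel

variable {n : ℕ} {A : Matrix (Fin n) (Fin n) ℝ} {s : ℕ → ℝ} {ρ : ℝ}

lemma IsHankelMat.exists_eq_hankelMatrix (hA : IsHankelMat A) : ∃ s, A = hankelMatrix s n := by
  have hfactor : (fun p : Fin n × Fin n => A p.1 p.2).FactorsThrough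
      fun p => (p.1 : ℕ) + (p.2 : ℕ) := fun p q hpq => hA _ _ _ _ hpq
  refine ⟨Function.extend (fun p : Fin n × Fin n => (p.1 : ℕ) + (p.2 : ℕ))
    (fun p => A p.1 p.2) 0, ?_⟩
  ext i j
  exact (hfactor.extend_apply 0 (i, j)).symm

lemma apply_self_eq_and_apply_eq_neg_of_apply_eq_neg {ι : Type*} [Finite ι] {A : Matrix ι ι ℝ}
    (hA : A.PosSemidef) {p q : ι} (hp : A p p ≤ ρ) (hq : A q q ≤ ρ) (hpq : A p q = -ρ) :
    A p p = ρ ∧ A q q = ρ ∧ ∀ k, A k q = -A k p := by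
  classical
  have := Fintype.ofFinite ι
  set v : ι → ℝ := Pi.single p 1 + Pi.single q 1
  have hquad : star v ⬝ᵥ A.mulVec v = A p p + A q q - 2 * ρ := by
    have hsymm : A q p = -ρ := (hA.isHermitian.apply p q).trans hpq
    simp only [v, star_trivial, Matrix.mulVec_add, add_dotProduct, dotProduct_add,
      Matrix.mulVec_single_one, single_one_dotProduct, Matrix.col_apply, hpq, hsymm]
    ring
  have hnonneg := hA.dotProduct_mulVec_nonneg v
  rw [hquad] at hnonneg
  have hp' : A p p = ρ := by linarith
  have hq' : A q q = ρ := by linarith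
  refine ⟨hp', hq', fun k => ?_⟩
  have hkernel := congrFun ((hA.dotProduct_mulVec_zero_iff v).1 (by rw [hquad]; linarith)) k
  simp only [v, Matrix.mulVec_add, Matrix.mulVec_single_one, Pi.add_apply, Matrix.col_apply,
    Pi.zero_apply] at hkernel
  linarith

lemma eq_and_shift_eq_neg_of_odd_eq_neg (hs : (hankelMatrix s n).PosSemidef)
    (hle : ∀ i < n, s (2 * i) ≤ ρ) {m : ℕ} (hm : m + 1 < n) (hodd : s (2 * m + 1) = -ρ) :
    s (2 * m) = ρ ∧ s (2 * (m + 1)) = ρ ∧ ∀ k < n, s (k + (m + 1)) = -s (k + m) := by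
  obtain ⟨hp, hq, hrow⟩ := apply_self_eq_and_apply_eq_neg_of_apply_eq_neg hs
    (p := ⟨m, m.lt_succ_self.trans hm⟩) (q := ⟨m + 1, hm⟩)
    (by simpa [hankelMatrix, two_mul] using hle m (by lia))
    (by simpa [hankelMatrix, two_mul] using hle (m + 1) hm)
    (by rw [← hodd, two_mul]; rfl)
  exact ⟨(congrArg s (two_mul m)).trans hp, (congrArg s (two_mul (m + 1))).trans hq,
    fun k hk => hrow ⟨k, hk⟩⟩

lemma odd_eq_neg_succ_iff (hs : (hankelMatrix s n).PosSemidef)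
    (hle : ∀ i < n, s (2 * i) ≤ ρ) {m : ℕ} (hm : m + 2 < n) :
    s (2 * (m + 1) + 1) = -ρ ↔ s (2 * m + 1) = -ρ := by
  constructor <;> intro hodd
  · obtain ⟨heven, -, hshift⟩ := eq_and_shift_eq_neg_of_odd_eq_neg hs hle hm hodd
    grind [hshift m (by lia)]
  · obtain ⟨-, heven, hshift⟩ :=
      eq_and_shift_eq_neg_of_odd_eq_neg hs hle (m.succ.lt_succ_self.trans hm) hodd
    grind [hshift (m + 2) hm]

lemma odd_eq_neg_of_odd_eq_neg (hs : (hankelMatrix s n).PosSemidef)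
    (hle : ∀ i < n, s (2 * i) ≤ ρ) {l m : ℕ} (hl : l + 1 < n) (hm : m + 1 < n)
    (hodd : s (2 * l + 1) = -ρ) : s (2 * m + 1) = -ρ := by
  have hiff_one : ∀ k, k + 1 < n → (s (2 * k + 1) = -ρ ↔ s (2 * 0 + 1) = -ρ) := by
    intro k
    induction k with
    | zero => simp
    | succ k ih => exact fun hk => (odd_eq_neg_succ_iff hs hle hk).trans (ih (by lia))
  exact (hiff_one m hm).2 ((hiff_one l hl).1 hodd)

lemma eq_mul_neg_one_pow_of_eq_neg (hρ : 0 < ρ) (hs : (hankelMatrix s n).PosSemidef)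
    (hle : ∀ i < n, s (2 * i) ≤ ρ) {p q : Fin n} (hpq : s (p + q) = -ρ) (i j : Fin n) :
    s (i + j) = ρ * (-1) ^ ((i : ℕ) + (j : ℕ)) := by
  obtain ⟨l, hl⟩ : Odd ((p : ℕ) + (q : ℕ)) := by
    by_contra heven
    obtain ⟨l, hl⟩ := Nat.not_odd_iff_even.1 heven
    have hdiag : 0 ≤ s (l + l) := hs.diag_nonneg (i := ⟨l, by lia⟩)
    rw [← hl, hpq] at hdiag
    linarith
  have hodd {m : ℕ} (hm : m + 1 < n) : s (2 * m + 1) = -ρ :=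
    odd_eq_neg_of_odd_eq_neg hs hle (by lia) hm (hl ▸ hpq)
  obtain ⟨m, hm | hm⟩ := ((i : ℕ) + (j : ℕ)).even_or_odd'
  · rw [hm, (even_two_mul m).neg_one_pow, mul_one]
    rcases lt_or_ge (m + 1) n with hmn | hmn
    · exact (eq_and_shift_eq_neg_of_odd_eq_neg hs hle hmn (hodd hmn)).1
    · obtain ⟨k, rfl⟩ : ∃ k, m = k + 1 := Nat.exists_eq_add_one.2 (by lia)
      have hk : k + 1 < n := by lia
      exact (eq_and_shift_eq_neg_of_odd_eq_neg hs hle hk (hodd hk)).2.1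
  · rw [hm, (odd_two_mul_add_one m).neg_one_pow, mul_neg_one]
    exact hodd (by lia)

lemma posSemidef_map_of_eq_mul_neg_one_pow {F : ℝ → ℝ} (hF : |F (-ρ)| ≤ F ρ)
    (hA : ∀ i j : Fin n, A i j = ρ * (-1) ^ ((i : ℕ) + (j : ℕ))) : (A.map F).PosSemidef := by
  have hmap : A.map F = hankelMatrix
      (atomicMoment ![(F ρ + F (-ρ)) / 2, (F ρ - F (-ρ)) / 2] ![1, -1]) n := by
    ext i j
    simpa [hA, hankelMatrix] using
      apply_mul_neg_one_pow_mul_pow_eq_atomicMoment F ρ 1 ((i : ℕ) + (j : ℕ))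
  rw [hmap]
  refine isPosSemidefSeq_iff_posSemidef_hankelMatrix.1 (isPosSemidefSeq_atomicMoment ?_ _) n
  obtain ⟨hneg, hpos⟩ := abs_le.1 hF
  simp only [Fin.forall_fin_two, Matrix.cons_val]
  constructor <;> linarith

lemma IsHankelMat.posSemidef_map (hρ : 0 < ρ) {F : ℝ → ℝ} {L : ℝ}
    (hF : AnalyticOnNhd ℝ F (Ioo (-ρ) ρ))
    (hmono : ∀ k, ∀ x ∈ Ioo 0 ρ, 0 ≤ iteratedDerivWithin k F (Ioo 0 ρ) x)
    (hL : Tendsto F (𝓝[<] ρ) (𝓝 L)) (hLF : L ≤ F ρ) (hF_neg : |F (-ρ)| ≤ F ρ)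
    (hHankel : IsHankelMat A) (hA : A.PosSemidef) (hAρ : ∀ i j, A i j ∈ Icc (-ρ) ρ) :
    (A.map F).PosSemidef := by
  by_cases hneg : ∃ p q, A p q = -ρ
  · obtain ⟨p, q, hpq⟩ := hneg
    obtain ⟨s, rfl⟩ := hHankel.exists_eq_hankelMatrix
    have hle (i : ℕ) (hi : i < n) : s (2 * i) ≤ ρ := two_mul i ▸ (hAρ ⟨i, hi⟩ ⟨i, hi⟩).2
    exact posSemidef_map_of_eq_mul_neg_one_pow hF_neg (eq_mul_neg_one_pow_of_eq_neg hρ hA hle hpq)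
  · push Not at hneg
    exact posSemidef_map_of_forall_mem_Ioc
      (fun B => posSemidef_map_of_absolutelyMonotone hρ hF hmono) hF.continuousOn hL hLF hρ hA
      fun i j => ⟨(hAρ i j).1.lt_of_ne' (hneg i j), (hAρ i j).2⟩

end Hankel

/-- Entrywise positivity preservers of positive semidefinite Hankel matrices with
entries in `[-ρ, ρ]`. -/
theorem preserver_closed_symm_hankel_TFAE (ρ : ℝ) (hρ : 0 < ρ) (F : ℝ → ℝ) :
    List.TFAE
      [∀ (n : ℕ) (A : Matrix (Fin n) (Fin n) ℝ), IsHankelMat A →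
          (∀ i j, A i j ∈ Set.Icc (-ρ) ρ) → A.PosSemidef → (A.map F).PosSemidef,
        ∀ (n : ℕ) (A : Matrix (Fin n) (Fin n) ℝ),
          (∃ μ : Measure ℝ, IsAdmissible μ ∧
            ∀ i j : Fin n, A i j = moment μ ((i : ℕ) + (j : ℕ))) →
          (∀ i j, A i j ∈ Set.Icc (-ρ) ρ) → A.PosSemidef → (A.map F).PosSemidef,
        AnalyticOnNhd ℝ F (Set.Ioo (-ρ) ρ) ∧
          (∀ k : ℕ, ∀ x ∈ Set.Ioo (0 : ℝ) ρ,
            0 ≤ iteratedDerivWithin k F (Set.Ioo 0 ρ) x) ∧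
          (∃ L : ℝ, Tendsto F (nhdsWithin ρ (Set.Iio ρ)) (nhds L) ∧ L ≤ F ρ) ∧
          |F (-ρ)| ≤ F ρ] := by
  tfae_have 1 → 2 := fun H n A ⟨_, _, hA⟩ =>
    H n A fun i j k l hijkl => by rw [hA, hA, hijkl]
  tfae_have 2 → 3 := by
    intro hmoment
    have H : PreservesAtomicMoments F ρ := .of_forall_moment_matrix hmoment
    exact ⟨H.analyticOnNhd, fun k _ => H.iteratedDerivWithin_nonneg k,
      H.exists_tendsto_nhdsLT_le hρ, H.abs_apply_neg_le hρ.le⟩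
  tfae_have 3 → 1 := by
    rintro ⟨hF, hmono, ⟨L, hL, hLF⟩, hF_neg⟩ n A hHankel hAρ hA
    exact hHankel.posSemidef_map hρ hF hmono hL hLF hF_neg hA hAρ
  tfae_finish
end

section
/- Let ρ ∈ (0,∞) and suppose F : [−ρ,ρ] → ℝ is real analytic on (−ρ,ρ), absolutely monotonic on (0,ρ) (all derivatives non-negative there), and both one-sided limits lim_{x→ρ⁻} F(x) and lim_{x→−ρ⁺} F(x) exist and are finite. If |F(−ρ) − lim_{x→−ρ⁺} F(x)| ≤ F(ρ) − lim_{x→ρ⁻} F(x), then applying F entrywise maps every positive semidefinite matrix of any finite size with entries in [−ρ,ρ] to a positive semidefinite matrix. Conversely, if the restriction of F to (−ρ,ρ) is an odd or an even function and F applied entrywise preserves positive semidefiniteness on all matrices with entries in [−ρ,ρ], then the above inequality holds. -/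
open Filter Set

/-!
Let `G` be the continuous extension to `[-ρ, ρ]` of the restriction of `F` to `(-ρ, ρ)`. Taylor's
theorem with Lagrange remainder bounds the partial sums of the Maclaurin series of `G`, whose
coefficients are nonnegative, by `G`; hence the series converges at `ρ`, and it represents `G` on
all of `[-ρ, ρ]`. By the Schur product theorem and closedness of the positive semidefinite cone,
`G` preserves positivity, and so do the pointwise limits of `(x / ρ) ^ (2 * k)` and
`(x / ρ) ^ (2 * k + 1)`, which are supported at `±ρ`. The jump inequality says exactly that `F - G`
is a combination of these two limits with nonnegative coefficients.

Conversely, for `|t| ≤ ρ` the matrix `[[ρ, t], [t, ρ]] ⊗ [[1, -1], [-1, 1]]` is positive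
semidefinite. Testing its image under `F` against `(1, 1, -1, -1)` and `(1, -1, -1, 1)` and letting
`t → ρ⁻` gives the two halves of the jump inequality.
-/

open scoped ContDiff Nat Topology

theorem isClosed_setOf_posSemidef {ι R : Type*} [Ring R] [PartialOrder R] [StarRing R]
    [TopologicalSpace R] [IsTopologicalSemiring R] [ContinuousStar R] [OrderClosedTopology R] :
    IsClosed {M : Matrix ι ι R | M.PosSemidef} := by
  have hform (x : ι →₀ R) : Continuous fun M : Matrix ι ι R =>
      x.sum fun i xi => x.sum fun j xj => star xi * M i j * xj := by
    simp only [Finsupp.sum]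
    fun_prop
  simp only [Matrix.PosSemidef, Matrix.IsHermitian, ofPred_and, ofPred_forall]
  exact (isClosed_eq (by fun_prop) continuous_id).inter
    (isClosed_iInter fun x => isClosed_le continuous_const (hform x))

/-- `PreservesPosSemidef s f` says that applying `f` entrywise maps positive semidefinite matrices
with entries in `s` to positive semidefinite matrices, in every finite size. -/
def PreservesPosSemidef (s : Set ℝ) (f : ℝ → ℝ) : Prop :=
  ∀ (n : ℕ) (A : Matrix (Fin n) (Fin n) ℝ), (∀ i j, A i j ∈ s) → A.PosSemidef →
    (A.map f).PosSemidef

namespace PreservesPosSemidef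

variable {s : Set ℝ} {f g : ℝ → ℝ}

theorem congr (hf : PreservesPosSemidef s f) (hfg : EqOn f g s) : PreservesPosSemidef s g := by
  intro n A hA hpos
  have hmap : A.map f = A.map g := Matrix.ext fun i j => hfg (hA i j)
  exact hmap ▸ hf n A hA hpos

theorem add (hf : PreservesPosSemidef s f) (hg : PreservesPosSemidef s g) :
    PreservesPosSemidef s fun x => f x + g x :=
  fun n A hA hpos => (hf n A hA hpos).add (hg n A hA hpos)

theorem mul (hf : PreservesPosSemidef s f) (hg : PreservesPosSemidef s g) :
    PreservesPosSemidef s fun x => f x * g x :=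
  fun n A hA hpos => (hf n A hA hpos).hadamard (hg n A hA hpos)

theorem const_mul {c : ℝ} (hf : PreservesPosSemidef s f) (hc : 0 ≤ c) :
    PreservesPosSemidef s fun x => c * f x :=
  fun n A hA hpos => (hf n A hA hpos).smul hc

theorem sum {α : Type*} {f : α → ℝ → ℝ} (hf : ∀ a, PreservesPosSemidef s (f a)) (t : Finset α) :
    PreservesPosSemidef s fun x => ∑ a ∈ t, f a x := by
  intro n A hA hpos
  have hmap : A.map (fun x => ∑ a ∈ t, f a x) = ∑ a ∈ t, A.map (f a) := by
    ext i j
    simp only [Matrix.map_apply, Matrix.sum_apply]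
  exact hmap ▸ Matrix.posSemidef_sum t fun a _ => hf a n A hA hpos

theorem of_tendsto {α : Type*} {l : Filter α} [l.NeBot] {f : α → ℝ → ℝ}
    (hf : ∀ a, PreservesPosSemidef s (f a))
    (hlim : ∀ x ∈ s, Tendsto (fun a => f a x) l (𝓝 (g x))) : PreservesPosSemidef s g := by
  intro n A hA hpos
  have hmap : Tendsto (fun a => A.map (f a)) l (𝓝 (A.map g)) :=
    tendsto_pi_nhds.2 fun i => tendsto_pi_nhds.2 fun j => hlim _ (hA i j)
  exact isClosed_setOf_posSemidef.mem_of_tendsto hmap (.of_forall fun a => hf a n A hA hpos)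

theorem of_hasSum {α : Type*} {f : α → ℝ → ℝ} (hf : ∀ a, PreservesPosSemidef s (f a))
    (hsum : ∀ x ∈ s, HasSum (fun a => f a x) (g x)) : PreservesPosSemidef s g :=
  of_tendsto (sum hf) hsum

theorem const_one : PreservesPosSemidef s fun _ => 1 := by
  intro n A _ _
  have hmap : A.map (fun _ => (1 : ℝ)) = Matrix.vecMulVec 1 (star 1) := by
    ext i j
    simp [Matrix.vecMulVec_apply]
  exact hmap ▸ Matrix.posSemidef_vecMulVec_self_star 1

theorem id : PreservesPosSemidef s fun x => x :=
  fun _ _ _ hpos => hpos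

theorem pow (hf : PreservesPosSemidef s f) (k : ℕ) : PreservesPosSemidef s fun x => f x ^ k := by
  induction k with
  | zero => simpa only [pow_zero] using const_one
  | succ k ih => simpa only [pow_succ] using ih.mul hf

theorem of_hasSum_pow {a : ℕ → ℝ} (ha : ∀ k, 0 ≤ a k)
    (hf : ∀ x ∈ s, HasSum (fun k => a k * x ^ k) (f x)) : PreservesPosSemidef s f :=
  of_hasSum (fun k => (id.pow k).const_mul (ha k)) hf

end PreservesPosSemidef

section TaylorSeries

theorem sum_taylor_le_of_iteratedDeriv_nonneg {f : ℝ → ℝ} {c x : ℝ} {n : ℕ} (hcx : c < x)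
    (hf : ∀ y ∈ Icc c x, ContDiffAt ℝ (n + 1) f y)
    (hpos : ∀ y ∈ Ioo c x, 0 ≤ iteratedDeriv (n + 1) f y) :
    ∑ k ∈ Finset.range (n + 1), iteratedDeriv k f c / k ! * (x - c) ^ k ≤ f x := by
  have hIcc : uIcc c x = Icc c x := uIcc_of_le hcx.le
  obtain ⟨y, hy, hremainder⟩ := taylor_mean_remainder_lagrange_iteratedDeriv hcx.ne
    (fun y hy => (hf y (hIcc ▸ hy)).contDiffWithinAt)
  rw [uIoo_of_le hcx.le] at hy
  have htaylor : taylorWithinEval f n (uIcc c x) c x =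
      ∑ k ∈ Finset.range (n + 1), iteratedDeriv k f c / k ! * (x - c) ^ k := by
    rw [taylor_within_apply]
    refine Finset.sum_congr rfl fun k hk => ?_
    have hkn : (k : WithTop ℕ∞) ≤ n + 1 := by exact_mod_cast (Finset.mem_range.1 hk).le
    rw [iteratedDerivWithin_eq_iteratedDeriv (uniqueDiffOn_uIcc hcx.ne)
      ((hf c (left_mem_Icc.2 hcx.le)).of_le hkn) left_mem_uIcc, smul_eq_mul]
    ring
  have hremainder_nonneg :
      0 ≤ iteratedDeriv (n + 1) f y * (x - c) ^ (n + 1) / (n + 1)! :=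
    div_nonneg (mul_nonneg (hpos y hy) (pow_nonneg (sub_nonneg.2 hcx.le) _)) (Nat.cast_nonneg _)
  rw [← htaylor, ← sub_nonneg, hremainder]
  exact hremainder_nonneg

theorem hasSum_taylor_of_summable {𝕜 : Type*} [RCLike 𝕜] {f : 𝕜 → 𝕜} {c : 𝕜} {r : ℝ}
    (hf : AnalyticOnNhd 𝕜 f (Metric.ball c r))
    (hsum : Summable fun k : ℕ => ‖iteratedDeriv k f c / (k ! : 𝕜)‖ * r ^ k) {x : 𝕜}
    (hx : x ∈ Metric.ball c r) :
    HasSum (fun k : ℕ => iteratedDeriv k f c / k ! * (x - c) ^ k) (f x) := by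
  have hr : 0 < r := Metric.pos_of_mem_ball hx
  have hseries := AnalyticOn.hasFPowerSeriesOnSubball (r := ENNReal.ofReal r)
    (ENNReal.ofReal_pos.2 hr) (Metric.eball_ofReal (x := c) ▸ hf.analyticOn) <|
      FormalMultilinearSeries.le_radius_of_summable _ <| by
        simpa only [FormalMultilinearSeries.ofScalars_norm, Real.coe_toNNReal _ hr.le] using hsum
  simpa only [FormalMultilinearSeries.ofScalars_apply_eq, smul_eq_mul] using
    hseries.hasSum_sub (Metric.eball_ofReal (x := c) ▸ hx)

theorem hasSum_pow_Icc_of_Ioo {a : ℕ → ℝ} {f : ℝ → ℝ} {r : ℝ} (hr : 0 < r)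
    (hsum : Summable fun k => ‖a k‖ * r ^ k) (hf : ContinuousOn f (Icc (-r) r))
    (hIoo : ∀ x ∈ Ioo (-r) r, HasSum (fun k => a k * x ^ k) (f x)) :
    ∀ x ∈ Icc (-r) r, HasSum (fun k => a k * x ^ k) (f x) := by
  have hbound : ∀ k, ∀ x ∈ Icc (-r) r, ‖a k * x ^ k‖ ≤ ‖a k‖ * r ^ k := fun k x hx => by
    rw [norm_mul, norm_pow]
    gcongr
    exact abs_le.2 hx
  have hcont : ContinuousOn (fun x => ∑' k, a k * x ^ k) (Icc (-r) r) :=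
    continuousOn_tsum (fun k => by fun_prop) hsum hbound
  have heq : EqOn (fun x => ∑' k, a k * x ^ k) f (Icc (-r) r) :=
    EqOn.of_subset_closure (fun x hx => (hIoo x hx).tsum_eq) hcont hf Ioo_subset_Icc_self
      (closure_Ioo (by linarith)).ge
  exact fun x hx => heq hx ▸ (Summable.of_norm_bounded hsum fun k => hbound k x hx).hasSum

end TaylorSeries

section AbsolutelyMonotone

variable {f : ℝ → ℝ} {r : ℝ}

theorem iteratedDeriv_nonneg_of_absolutelyMonotoneOn_Ioo {c b : ℝ}
    (hc : AnalyticAt ℝ f c) (hf : AbsolutelyMonotoneOn f (Ioo c b)) (k : ℕ) :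
    ∀ x ∈ Ico c b, 0 ≤ iteratedDeriv k f x := by
  have hopen : ∀ x ∈ Ioo c b, 0 ≤ iteratedDeriv k f x := fun x hx => by
    simpa only [iteratedDerivWithin_of_isOpen isOpen_Ioo hx] using
      hf.iteratedDerivWithin_nonneg isOpen_Ioo.uniqueDiffOn k hx
  have hcont : ContinuousAt (iteratedDeriv k f) c := by
    rw [iteratedDeriv_eq_iterate]
    exact (hc.iterated_deriv k).continuousAt
  intro x hx
  rcases hx.1.eq_or_lt with rfl | hlt
  · exact ge_of_tendsto (hcont.mono_left nhdsWithin_le_nhds)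
      (eventually_of_mem (Ioo_mem_nhdsGT hx.2) hopen)
  · exact hopen x ⟨hlt, hx.2⟩

theorem summable_taylor_of_iteratedDeriv_nonneg {c b : ℝ} (hcb : c < b)
    (hb : ContinuousWithinAt f (Ioo c b) b) (hdiff : ∀ x ∈ Ico c b, ContDiffAt ℝ ∞ f x)
    (hpos : ∀ k, ∀ x ∈ Ico c b, 0 ≤ iteratedDeriv k f x) :
    Summable fun k : ℕ => iteratedDeriv k f c / k ! * (b - c) ^ k := by
  have hterm (k : ℕ) : 0 ≤ iteratedDeriv k f c / k ! * (b - c) ^ k :=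
    mul_nonneg (div_nonneg (hpos k c (left_mem_Ico.2 hcb)) (Nat.cast_nonneg _))
      (pow_nonneg (sub_nonneg.2 hcb.le) k)
  have hpartial (n : ℕ) : ∀ x ∈ Ioo c b,
      ∑ k ∈ Finset.range (n + 1), iteratedDeriv k f c / k ! * (x - c) ^ k ≤ f x := fun x hx =>
    sum_taylor_le_of_iteratedDeriv_nonneg hx.1
      (fun y hy => (hdiff y ⟨hy.1, hy.2.trans_lt hx.2⟩).of_le (by exact_mod_cast le_top))
      (fun y hy => hpos (n + 1) y ⟨hy.1.le, hy.2.trans hx.2⟩)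
  have hpartial_right (n : ℕ) :
      ∑ k ∈ Finset.range (n + 1), iteratedDeriv k f c / k ! * (b - c) ^ k ≤ f b :=
    ContinuousWithinAt.closure_le (closure_Ioo hcb.ne ▸ right_mem_Icc.2 hcb.le)
      (Continuous.continuousWithinAt (by fun_prop)) hb (hpartial n)
  refine summable_of_sum_range_le hterm fun n => le_trans ?_ (hpartial_right n)
  exact Finset.sum_le_sum_of_subset_of_nonneg (Finset.range_mono n.le_succ) fun k _ _ => hterm k

theorem preservesPosSemidef_of_absolutelyMonotoneOn (hr : 0 < r)
    (hcont : ContinuousOn f (Icc (-r) r)) (han : AnalyticOnNhd ℝ f (Ioo (-r) r))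
    (habs : AbsolutelyMonotoneOn f (Ioo 0 r)) : PreservesPosSemidef (Icc (-r) r) f := by
  have hsub : Ico 0 r ⊆ Ioo (-r) r := fun x hx => ⟨by linarith [hx.1], hx.2⟩
  have hpos : ∀ k, ∀ x ∈ Ico 0 r, 0 ≤ iteratedDeriv k f x :=
    iteratedDeriv_nonneg_of_absolutelyMonotoneOn_Ioo (han 0 (hsub (left_mem_Ico.2 hr))) habs
  have hcoeff (k : ℕ) : 0 ≤ iteratedDeriv k f 0 / k ! :=
    div_nonneg (hpos k 0 (left_mem_Ico.2 hr)) (Nat.cast_nonneg _)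
  have hsum : Summable fun k : ℕ => ‖iteratedDeriv k f 0 / (k ! : ℝ)‖ * r ^ k := by
    have hright : ContinuousWithinAt f (Ioo 0 r) r :=
      (hcont r (right_mem_Icc.2 (by linarith))).mono fun x hx => ⟨by linarith [hx.1], hx.2.le⟩
    simpa only [Real.norm_of_nonneg (hcoeff _), sub_zero] using
      summable_taylor_of_iteratedDeriv_nonneg hr hright
        (fun x hx => (han x (hsub hx)).contDiffAt) hpos
  have hball : Metric.ball 0 r = Ioo (-r) r := by simp [Real.ball_eq_Ioo]
  have hseries : ∀ x ∈ Ioo (-r) r,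
      HasSum (fun k : ℕ => iteratedDeriv k f 0 / k ! * x ^ k) (f x) := fun x hx => by
    rw [← hball] at han hx
    simpa only [sub_zero] using hasSum_taylor_of_summable han hsum hx
  exact .of_hasSum_pow hcoeff (hasSum_pow_Icc_of_Ioo hr hsum hcont hseries)

end AbsolutelyMonotone

section EndpointJump

/-- The restriction of the monomial `(x / r) ^ m` to the endpoints `±r`, extended by zero. It
depends only on the parity of `m`, and models an even or odd jump at the ends of `[-r, r]`. -/
noncomputable def endpointPow (r : ℝ) (m : ℕ) : ℝ → ℝ :=
  indicator {-r, r} fun x => (x / r) ^ m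

variable {r : ℝ}

theorem tendsto_div_pow_endpointPow (hr : 0 < r) (m : ℕ) {x : ℝ} (hx : x ∈ Icc (-r) r) :
    Tendsto (fun k : ℕ => (x / r) ^ (2 * k + m)) atTop (𝓝 (endpointPow r m x)) := by
  by_cases hend : x ∈ ({-r, r} : Set ℝ)
  · have hsq : (x / r) ^ 2 = 1 := by
      rw [div_pow, div_eq_one_iff_eq (by positivity), sq_eq_sq_iff_eq_or_eq_neg]
      exact hend.symm
    simp only [endpointPow, indicator_of_mem hend, pow_add, pow_mul, hsq, one_pow, one_mul]
    exact tendsto_const_nhds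
  · have hlt : |x / r| < 1 := by
      rw [abs_div, abs_of_pos hr, div_lt_one hr]
      exact abs_lt.2
        ⟨hx.1.lt_of_ne fun h => hend (.inl h.symm), hx.2.lt_of_ne fun h => hend (.inr h)⟩
    rw [endpointPow, indicator_of_notMem hend]
    refine (tendsto_pow_atTop_nhds_zero_of_abs_lt_one hlt).comp ?_
    exact tendsto_atTop_mono (fun k => show k ≤ 2 * k + m by omega) tendsto_id

theorem preservesPosSemidef_endpointPow (hr : 0 < r) (m : ℕ) :
    PreservesPosSemidef (Icc (-r) r) (endpointPow r m) := by
  have hscale : PreservesPosSemidef (Icc (-r) r) fun x => x / r := by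
    simpa only [div_eq_inv_mul] using PreservesPosSemidef.id.const_mul (inv_nonneg.2 hr.le)
  exact .of_tendsto (fun k => hscale.pow (2 * k + m)) fun x => tendsto_div_pow_endpointPow hr m

theorem eqOn_add_endpointPow {f g : ℝ → ℝ} (hr : 0 < r) (hfg : EqOn g f (Ioo (-r) r)) :
    EqOn (fun x => g x +
      (((f r - g r) + (f (-r) - g (-r))) / 2 * endpointPow r 0 x +
        ((f r - g r) - (f (-r) - g (-r))) / 2 * endpointPow r 1 x)) f (Icc (-r) r) := by
  intro x hx
  by_cases hend : x ∈ ({-r, r} : Set ℝ)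
  · simp only [endpointPow, indicator_of_mem hend]
    rcases hend with rfl | rfl <;> field_simp <;> ring
  · have hIoo : x ∈ Ioo (-r) r :=
      ⟨hx.1.lt_of_ne fun h => hend (.inl h.symm), hx.2.lt_of_ne fun h => hend (.inr h)⟩
    simp [endpointPow, indicator_of_notMem hend, hfg hIoo]

theorem PreservesPosSemidef.of_abs_jump_le {f g : ℝ → ℝ} (hr : 0 < r)
    (hg : PreservesPosSemidef (Icc (-r) r) g) (hfg : EqOn g f (Ioo (-r) r))
    (hjump : |f (-r) - g (-r)| ≤ f r - g r) : PreservesPosSemidef (Icc (-r) r) f := by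
  obtain ⟨hlower, hupper⟩ := abs_le.1 hjump
  have heven := (preservesPosSemidef_endpointPow hr 0).const_mul
    (c := ((f r - g r) + (f (-r) - g (-r))) / 2) (by linarith)
  have hodd := (preservesPosSemidef_endpointPow hr 1).const_mul
    (c := ((f r - g r) - (f (-r) - g (-r))) / 2) (by linarith)
  exact (hg.add (heven.add hodd)).congr (eqOn_add_endpointPow hr hfg)

end EndpointJump

section Necessity

variable {f : ℝ → ℝ} {r : ℝ}

/-- The matrix `[[r, t], [t, r]] ⊗ [[1, -1], [-1, 1]]`, which detects the even and odd parts of a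
function at `t` and `r`. -/
def parityTestMatrix (r t : ℝ) : Matrix (Fin 4) (Fin 4) ℝ :=
  !![r, -r, t, -t; -r, r, -t, t; t, -t, r, -r; -t, t, -r, r]

theorem posSemidef_parityTestMatrix {t : ℝ} (ht : t ∈ Icc (-r) r) :
    (parityTestMatrix r t).PosSemidef := by
  let u : Fin 4 → ℝ := ![1, -1, 1, -1]
  let v : Fin 4 → ℝ := ![1, -1, -1, 1]
  have hdecomp : parityTestMatrix r t =
      ((r + t) / 2) • Matrix.vecMulVec u (star u) +
        ((r - t) / 2) • Matrix.vecMulVec v (star v) := by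
    ext i j
    fin_cases i <;> fin_cases j <;> simp [parityTestMatrix, u, v] <;> ring
  rw [hdecomp]
  exact ((Matrix.posSemidef_vecMulVec_self_star u).smul (by linarith [ht.1])).add
    ((Matrix.posSemidef_vecMulVec_self_star v).smul (by linarith [ht.2]))

theorem parityTestMatrix_mem_Icc {t : ℝ} (ht : t ∈ Icc (-r) r) (i j : Fin 4) :
    parityTestMatrix r t i j ∈ Icc (-r) r := by
  have hr : r ∈ Icc (-r) r := right_mem_Icc.2 (ht.1.trans ht.2)
  have hneg {x : ℝ} (hx : x ∈ Icc (-r) r) : -x ∈ Icc (-r) r :=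
    ⟨neg_le_neg hx.2, neg_le.1 hx.1⟩
  fin_cases i <;> fin_cases j <;> first | exact hr | exact hneg hr | exact ht | exact hneg ht

theorem PreservesPosSemidef.add_neg_le_and_sub_neg_le (hf : PreservesPosSemidef (Icc (-r) r) f)
    {t : ℝ} (ht : t ∈ Icc (-r) r) :
    f t + f (-t) ≤ f r + f (-r) ∧ f t - f (-t) ≤ f r - f (-r) := by
  have hpos := hf 4 _ (parityTestMatrix_mem_Icc ht) (posSemidef_parityTestMatrix ht)
  have heven := hpos.dotProduct_mulVec_nonneg ![1, 1, -1, -1]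
  have hodd := hpos.dotProduct_mulVec_nonneg ![1, -1, -1, 1]
  simp [parityTestMatrix, dotProduct, Matrix.mulVec, Fin.sum_univ_four] at heven hodd
  constructor <;> linarith

theorem PreservesPosSemidef.abs_jump_le {Lp Lm : ℝ} (hf : PreservesPosSemidef (Icc (-r) r) f)
    (hr : 0 < r) (hLp : Tendsto f (𝓝[<] r) (𝓝 Lp)) (hLm : Tendsto f (𝓝[>] (-r)) (𝓝 Lm)) :
    |f (-r) - Lm| ≤ f r - Lp := by
  have hneg : Tendsto (fun t => f (-t)) (𝓝[<] r) (𝓝 Lm) := hLm.comp tendsto_neg_nhdsLT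
  have hparity : ∀ᶠ t in 𝓝[<] r,
      f t + f (-t) ≤ f r + f (-r) ∧ f t - f (-t) ≤ f r - f (-r) := by
    filter_upwards [Ioo_mem_nhdsLT (neg_lt_self hr)] with t ht
    exact hf.add_neg_le_and_sub_neg_le (Ioo_subset_Icc_self ht)
  have heven : Lp + Lm ≤ f r + f (-r) :=
    le_of_tendsto (hLp.add hneg) (hparity.mono fun _ => And.left)
  have hodd : Lp - Lm ≤ f r - f (-r) :=
    le_of_tendsto (hLp.sub hneg) (hparity.mono fun _ => And.right)
  exact abs_le.2 ⟨by linarith, by linarith⟩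

end Necessity

theorem preserver_closed_symm_boundary_general (ρ : ℝ) (hρ : 0 < ρ) (F : ℝ → ℝ)
    (hAn : AnalyticOnNhd ℝ F (Ioo (-ρ) ρ))
    (hAbs : ∀ k : ℕ, ∀ x ∈ Ioo (0 : ℝ) ρ, 0 ≤ iteratedDerivWithin k F (Ioo 0 ρ) x)
    (Lp Lm : ℝ) (hLp : Tendsto F (𝓝[<] ρ) (𝓝 Lp)) (hLm : Tendsto F (𝓝[>] (-ρ)) (𝓝 Lm)) :
    |F (-ρ) - Lm| ≤ F ρ - Lp ↔ PreservesPosSemidef (Icc (-ρ) ρ) F := by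
  refine ⟨fun hjump => ?_, fun hF => hF.abs_jump_le hρ hLp hLm⟩
  have hlt : -ρ < ρ := neg_lt_self hρ
  let G := extendFrom (Ioo (-ρ) ρ) F
  have hGcont : ContinuousOn G (Icc (-ρ) ρ) :=
    continuousOn_Icc_extendFrom_Ioo hAn.continuousOn hLm hLp
  have hGm : G (-ρ) = Lm := eq_lim_at_left_extendFrom_Ioo hlt hLm
  have hGp : G ρ = Lp := eq_lim_at_right_extendFrom_Ioo hlt hLp
  have hGF : EqOn G F (Ioo (-ρ) ρ) := fun x hx =>
    extendFrom_eq (subset_closure hx) (hAn.continuousOn x hx)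
  have hGan : AnalyticOnNhd ℝ G (Ioo (-ρ) ρ) := hAn.congr isOpen_Ioo hGF.symm
  have hsub : Ioo 0 ρ ⊆ Ioo (-ρ) ρ := Ioo_subset_Ioo_left (by linarith)
  have hGabs : AbsolutelyMonotoneOn G (Ioo 0 ρ) := by
    refine (AbsolutelyMonotoneOn.iff_iteratedDerivWithin_nonneg isOpen_Ioo.uniqueDiffOn).2
      ⟨(hGan.mono hsub).contDiffOn isOpen_Ioo.uniqueDiffOn, fun k x hx => ?_⟩
    rw [iteratedDerivWithin_congr (hGF.mono hsub) hx]
    exact hAbs k x hx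
  exact (preservesPosSemidef_of_absolutelyMonotoneOn hρ hGcont hGan hGabs).of_abs_jump_le hρ hGF
    (by rwa [hGm, hGp])

/-- Boundary behaviour of entrywise positivity preservers on matrices with entries in
`[-ρ, ρ]`: the jump condition at `±ρ` is sufficient for preservation, and necessary when
the analytic restriction is odd or even. -/
theorem preserver_closed_symm_boundary (ρ : ℝ) (hρ : 0 < ρ) (F : ℝ → ℝ)
    (hAn : AnalyticOnNhd ℝ F (Set.Ioo (-ρ) ρ))
    (hAbs : ∀ k : ℕ, ∀ x ∈ Set.Ioo (0 : ℝ) ρ,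
      0 ≤ iteratedDerivWithin k F (Set.Ioo 0 ρ) x)
    (Lp Lm : ℝ)
    (hLp : Tendsto F (nhdsWithin ρ (Set.Iio ρ)) (nhds Lp))
    (hLm : Tendsto F (nhdsWithin (-ρ) (Set.Ioi (-ρ))) (nhds Lm)) :
    ((|F (-ρ) - Lm| ≤ F ρ - Lp) →
      ∀ (n : ℕ) (A : Matrix (Fin n) (Fin n) ℝ), (∀ i j, A i j ∈ Set.Icc (-ρ) ρ) →
        A.PosSemidef → (A.map F).PosSemidef) ∧
    (((∀ x ∈ Set.Ioo (-ρ) ρ, F (-x) = -F x) ∨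
        (∀ x ∈ Set.Ioo (-ρ) ρ, F (-x) = F x)) →
      (∀ (n : ℕ) (A : Matrix (Fin n) (Fin n) ℝ), (∀ i j, A i j ∈ Set.Icc (-ρ) ρ) →
        A.PosSemidef → (A.map F).PosSemidef) →
      |F (-ρ) - Lm| ≤ F ρ - Lp) := by
  have hiff := preserver_closed_symm_boundary_general ρ hρ F hAn hAbs Lp Lm hLp hLm
  exact ⟨hiff.1, fun _ => hiff.2⟩
end

section
/- Fix an integer d ≥ 1. A function F : ℝ → ℝ maps M([−1,1]^d) into itself when applied entrywise — that is, for every admissible measure μ on ℝ^d supported in [−1,1]^d there exists an admissible measure σ supported in [−1,1]^d with F(s_α(μ)) = s_α(σ) for every multi-index α ∈ ℕ₀^d — if and only if F is (the restriction of) an absolutely monotonic entire function. -/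
open MeasureTheory

/-- An admissible measure on `ℝ^d`: a non-negative Borel measure all of whose absolute
moments are finite. -/
def IsAdmissibleD {d : ℕ} (μ : Measure (Fin d → ℝ)) : Prop :=
  ∀ α : Fin d → ℕ, Integrable (fun x => ∏ i, x i ^ α i) μ

/-- The moment of a measure on `ℝ^d` corresponding to the multi-index `α`. -/
noncomputable def momentD {d : ℕ} (μ : Measure (Fin d → ℝ)) (α : Fin d → ℕ) : ℝ :=
  ∫ x, ∏ i, x i ^ α i ∂μ

/-- An absolutely monotonic entire function: a power series with non-negative
coefficients converging at every real point. -/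
def AbsolutelyMonotonicEntire (G : ℝ → ℝ) : Prop :=
  ∃ c : ℕ → ℝ, (∀ n, 0 ≤ c n) ∧ ∀ x : ℝ, HasSum (fun n => c n * x ^ n) (G x)

/-!
A measure on `[-1, 1]` can be placed on an edge of the cube, so `F` also preserves the moment
sequences of measures on `[-1, 1]`, where everything is decided by integrating suitable polynomials.

* The moments of the mass `exp y` at `exp (-h)` are `exp (y - k * h)`, and `(1 - t) ^ n ≥ 0`
  on `[-1, 1]`; hence all forward differences of `F ∘ exp` are nonnegative. By Bernstein's theorem
  `F ∘ exp` is smooth, and so is `F` on `(0, ∞)`.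
* For `F` smooth, Horn's argument applies to the moments `x + ε * u ^ k`: integrating
  `∏ m < n, (t - u ^ m) ^ 2` and letting `ε → 0` isolates the `n`-th Taylor coefficient of `F` at
  `x > 0`, which is therefore nonnegative. By Bernstein's theorem again, `F (a + ·)` agrees on
  `[0, ∞)` with an absolutely monotonic entire function for every `a > 0`.
* A measure on `[-1, 1]` is determined away from `0` by any tail of its moments. Applied to moments
  `1 + b * v ^ k`, which are eventually positive but may be negative for `k = 1`, this extends the
  agreement to the negative reals. Let `a → 0`.

Conversely, for `G = ∑ cₙ xⁿ` the moments of `∑ cₙ μⁿ`, with powers taken under multiplicative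
convolution, are the images under `G` of those of `μ`.
-/

open Filter Topology Polynomial Set
open scoped ContDiff
/-! ### Absolutely monotonic entire functions -/

theorem absolutelyMonotonicEntire_tsum {c : ℕ → ℝ} (hc : ∀ n, 0 ≤ c n)
    (hs : ∀ x ≥ 0, Summable fun n => c n * x ^ n) :
    AbsolutelyMonotonicEntire fun x => ∑' n, c n * x ^ n := by
  refine ⟨c, hc, fun x => Summable.hasSum ?_⟩
  refine Summable.of_norm_bounded (hs |x| (abs_nonneg x)) fun n => ?_
  rw [norm_mul, norm_pow, Real.norm_of_nonneg (hc n), Real.norm_eq_abs]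

theorem absolutelyMonotonicEntire_sum_range (N : ℕ) {a : ℕ → ℝ} (ha : ∀ k, 0 ≤ a k) :
    AbsolutelyMonotonicEntire fun x => ∑ k ∈ Finset.range N, a k * x ^ k := by
  refine ⟨fun k => if k ∈ Finset.range N then a k else 0, fun k => ?_, fun x => ?_⟩
  · exact ite_nonneg (ha k) le_rfl
  · have hterm : ∀ k ∈ Finset.range N,
        (if k ∈ Finset.range N then a k else 0) * x ^ k = a k * x ^ k :=
      fun k hk => by rw [if_pos hk]
    beta_reduce
    rw [← Finset.sum_congr rfl hterm]
    exact hasSum_sum_of_ne_finset_zero fun k hk => by rw [if_neg hk, zero_mul]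

theorem AbsolutelyMonotonicEntire.contDiff {G : ℝ → ℝ} (hG : AbsolutelyMonotonicEntire G) :
    ContDiff ℝ ∞ G := by
  obtain ⟨c, hc, hsum⟩ := hG
  have hradius : (FormalMultilinearSeries.ofScalars ℝ c).radius = ⊤ := by
    refine FormalMultilinearSeries.radius_eq_top_of_summable_norm _ fun r => ?_
    simpa only [FormalMultilinearSeries.ofScalars_norm, Real.norm_of_nonneg (hc _)]
      using (hsum r).summable
  have hseries : HasFPowerSeriesOnBall G (FormalMultilinearSeries.ofScalars ℝ c) 0 ⊤ :=
    { r_le := hradius.ge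
      r_pos := ENNReal.zero_lt_top
      hasSum := fun {y} _ => by
        simpa [FormalMultilinearSeries.ofScalars_apply_eq, mul_comm] using hsum y }
  have hanalytic : AnalyticOnNhd ℝ G univ := by
    simpa using hseries.analyticOnNhd
  exact contDiffOn_univ.1 (hanalytic.contDiffOn uniqueDiffOn_univ)

theorem coeff_mul_pow_le_of_hasSum {c : ℕ → ℝ} (hc : ∀ n, 0 ≤ c n) {x s : ℝ} (hx : 0 ≤ x)
    (hs : HasSum (fun n => c n * x ^ n) s) (k : ℕ) : c k * x ^ k ≤ s :=
  le_hasSum hs k fun n _ => mul_nonneg (hc n) (pow_nonneg hx n)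

-- The value at `2 * x` dominates the series at `x` by a geometric series.
theorem hasSum_of_tendsto_coeff {ι : Type*} {l : Filter ι} [l.NeBot] {c : ι → ℕ → ℝ}
    (hc : ∀ i n, 0 ≤ c i n) {g : ι → ℝ → ℝ}
    (hg : ∀ i x, HasSum (fun n => c i n * x ^ n) (g i x)) {f : ℝ → ℝ}
    (hf : ∀ x ≥ 0, Tendsto (fun i => g i x) l (𝓝 (f x))) {b : ℕ → ℝ}
    (hb : ∀ n, Tendsto (fun i => c i n) l (𝓝 (b n))) {x : ℝ} (hx : 0 ≤ x) :
    HasSum (fun n => b n * x ^ n) (f x) := by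
  have hx2 : 0 ≤ 2 * x := by positivity
  have hterm : ∀ n, Tendsto (fun i => c i n * x ^ n) l (𝓝 (b n * x ^ n)) :=
    fun n => (hb n).mul_const _
  have hgeom : Summable fun n : ℕ => (1 / 2 : ℝ) ^ n * (f (2 * x) + 1) :=
    summable_geometric_two.mul_right _
  have hdom : ∀ᶠ i in l, ∀ n, ‖c i n * x ^ n‖ ≤ (1 / 2) ^ n * (f (2 * x) + 1) := by
    filter_upwards [(hf _ hx2).eventually_le_const (lt_add_one _)] with i hi n
    rw [Real.norm_of_nonneg (mul_nonneg (hc i n) (pow_nonneg hx n))]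
    calc c i n * x ^ n = (1 / 2) ^ n * (c i n * (2 * x) ^ n) := by
          rw [mul_left_comm, ← mul_pow]; ring_nf
      _ ≤ (1 / 2) ^ n * g i (2 * x) := by
          gcongr; exact coeff_mul_pow_le_of_hasSum (hc i) hx2 (hg i _) n
      _ ≤ (1 / 2) ^ n * (f (2 * x) + 1) := by gcongr
  have hlim := tendsto_tsum_of_dominated_convergence hgeom hterm hdom
  simp only [(hg _ _).tsum_eq] at hlim
  rw [tendsto_nhds_unique (hf x hx) hlim]
  refine (Summable.of_norm_bounded hgeom fun n => ?_).hasSum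
  exact le_of_tendsto (hterm n).norm (hdom.mono fun i hi => hi n)

theorem exists_absolutelyMonotonicEntire_eqOn_of_tendsto {ι : Type*} {l : Filter ι} [l.NeBot]
    {g : ι → ℝ → ℝ} (hg : ∀ i, AbsolutelyMonotonicEntire (g i)) {f : ℝ → ℝ}
    (hf : ∀ x ≥ 0, Tendsto (fun i => g i x) l (𝓝 (f x))) :
    ∃ G, AbsolutelyMonotonicEntire G ∧ EqOn f G (Ici 0) := by
  choose c hc hsum using hg
  have hU : (Ultrafilter.of l : Filter ι) ≤ l := Ultrafilter.of_le l
  have hcoeff : ∀ n, ∃ b ∈ Icc 0 (f 1 + 1),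
      Tendsto (fun i => c i n) (Ultrafilter.of l) (𝓝 b) := by
    intro n
    refine isCompact_Icc.ultrafilter_le_nhds' ((Ultrafilter.of l).map fun i => c i n) (hU ?_)
    filter_upwards [(hf 1 zero_le_one).eventually_le_const (lt_add_one _)] with i hi
    have hle := coeff_mul_pow_le_of_hasSum (hc i) zero_le_one (hsum i 1) n
    exact ⟨hc i n, by linarith [one_pow (M := ℝ) n ▸ hle]⟩
  choose b hb hlim using hcoeff
  have hsumb : ∀ x ≥ 0, HasSum (fun n => b n * x ^ n) (f x) := fun x hx =>
    hasSum_of_tendsto_coeff hc hsum (fun y hy => (hf y hy).mono_left hU) hlim hx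
  exact ⟨_, absolutelyMonotonicEntire_tsum (fun n => (hb n).1) fun x hx => (hsumb x hx).summable,
    fun x hx => (hsumb x hx).tsum_eq.symm⟩

/-! ### Bernstein's theorem on functions with nonnegative forward differences -/

theorem smul_add_smul_one_pow {R A : Type*} [CommRing R] [Ring A] [Algebra R A] (a b : R) (T : A)
    (n : ℕ) : (a • T + b • 1) ^ n =
      ∑ k ∈ Finset.range (n + 1), (n.choose k * a ^ k * b ^ (n - k)) • T ^ k := by
  rw [(((Commute.one_right T).smul_left a).smul_right b).add_pow]
  refine Finset.sum_congr rfl fun k _ => ?_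
  rw [_root_.smul_pow, _root_.smul_pow, one_pow, mul_smul_one, ← nsmul_eq_mul',
    ← Nat.cast_smul_eq_nsmul R, smul_smul, smul_smul]
  ring_nf

-- Both sides are the `n`-th power of `x E + (1 - x) = x Δ + 1`, with `E` the shift by `h`.
theorem sum_bernstein_eq_sum_fwdDiff {M R : Type*} [AddCommMonoid M] [CommRing R] (f : M → R)
    (h y : M) (x : R) (n : ℕ) :
    ∑ k ∈ Finset.range (n + 1), n.choose k * x ^ k * (1 - x) ^ (n - k) * f (y + k • h) =
      ∑ k ∈ Finset.range (n + 1), n.choose k * x ^ k * (fwdDiff h)^[k] f y := by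
  let D : Module.End R (M → R) := ⟨⟨fwdDiff h, fwdDiff_add h⟩, fwdDiff_const_smul h⟩
  have hD (k : ℕ) : (D ^ k) f y = (fwdDiff h)^[k] f y :=
    congr_fun (Module.End.pow_apply D k f) y
  have hpow (a b : R) (A : Module.End R (M → R)) (k : ℕ) : ((a • A + b • 1) ^ k) f y =
      ∑ j ∈ Finset.range (k + 1), k.choose j * a ^ j * b ^ (k - j) * (A ^ j) f y := by
    rw [smul_add_smul_one_pow a b A k]
    simp only [LinearMap.sum_apply, LinearMap.smul_apply, Finset.sum_apply, Pi.smul_apply,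
      smul_eq_mul]
  have hshift (k : ℕ) : (((1 : R) • D + (1 : R) • 1) ^ k) f y = f (y + k • h) := by
    simp only [hpow, shift_eq_sum_fwdDiff_iter h f, hD, one_pow, mul_one, nsmul_eq_mul]
  have hop : x • ((1 : R) • D + (1 : R) • 1) + (1 - x) • 1 = x • D + (1 : R) • 1 := by module
  calc
    _ = ((x • ((1 : R) • D + (1 : R) • 1) + (1 - x) • 1) ^ n) f y := by
      simp only [hpow x, hshift]
    _ = _ := by simp only [hop, hpow, hD, one_pow, mul_one]

theorem exists_abs_sum_fwdDiff_sub_lt {f : ℝ → ℝ} {R : ℝ} (hR : 0 < R)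
    (hf : ContinuousOn f (Icc 0 R)) {ε : ℝ} (hε : 0 < ε) :
    ∃ n : ℕ, ∀ x ∈ Icc 0 R, |∑ k ∈ Finset.range (n + 1),
      n.choose k * (x / R) ^ k * (fwdDiff (R / n))^[k] f 0 - f x| < ε := by
  have hscale (t : unitInterval) : R * t ∈ Icc 0 R :=
    ⟨mul_nonneg hR.le t.2.1, mul_le_of_le_one_right hR.le t.2.2⟩
  let g : C(unitInterval, ℝ) := ⟨fun t => f (R * t), hf.comp_continuous (by fun_prop) hscale⟩
  obtain ⟨n, hn⟩ := ((bernsteinApproximation_uniform g).eventually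
    (Metric.ball_mem_nhds g hε)).exists
  refine ⟨n, fun x hx => ?_⟩
  let t : unitInterval := ⟨x / R, div_nonneg hx.1 hR.le, (div_le_one hR).2 hx.2⟩
  have happrox := (ContinuousMap.dist_lt_iff hε).1 hn t
  have hgt : g t = f x := congrArg f (mul_div_cancel₀ x hR.ne')
  have hnode (k : Fin (n + 1)) : g (bernstein.z k) = f (0 + (k : ℕ) • (R / n)) := by
    refine congrArg f ?_
    simp only [bernstein.z, nsmul_eq_mul]
    ring
  rw [Real.dist_eq, hgt, bernsteinApproximation.apply] at happrox
  simp only [hnode, bernstein_apply, smul_eq_mul] at happrox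
  rwa [← sum_bernstein_eq_sum_fwdDiff, Finset.sum_range]

theorem exists_absolutelyMonotonicEntire_eqOn_of_fwdDiff_iter_nonneg {f : ℝ → ℝ}
    (hf : ContinuousOn f (Ici 0)) (hΔ : ∀ h ≥ 0, ∀ n, 0 ≤ (fwdDiff h)^[n] f 0) :
    ∃ G, AbsolutelyMonotonicEntire G ∧ EqOn f G (Ici 0) := by
  choose n hn using fun j : ℕ => exists_abs_sum_fwdDiff_sub_lt j.cast_add_one_pos
    (hf.mono Icc_subset_Ici_self) (Nat.one_div_pos_of_nat (α := ℝ) (n := j))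
  refine exists_absolutelyMonotonicEntire_eqOn_of_tendsto (l := atTop) (g := fun j x =>
    ∑ k ∈ Finset.range (n j + 1),
      ((n j).choose k / (j + 1) ^ k * (fwdDiff (((j : ℝ) + 1) / n j))^[k] f 0) * x ^ k)
    (fun j => absolutelyMonotonicEntire_sum_range _ fun k => ?_) fun x hx => ?_
  · exact mul_nonneg (by positivity) (hΔ _ (by positivity) k)
  · refine tendsto_iff_dist_tendsto_zero.2 (squeeze_zero' (Eventually.of_forall fun _ =>
      dist_nonneg) ?_ (tendsto_one_div_add_atTop_nhds_zero_nat (𝕜 := ℝ)))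
    filter_upwards [eventually_ge_atTop ⌈x⌉₊] with j hj
    have hxj : x ≤ j + 1 := (Nat.ceil_le.1 hj).trans (by linarith)
    refine le_of_eq_of_le ?_ (hn j x ⟨hx, hxj⟩).le
    rw [Real.dist_eq]
    congr! 3
    ring

theorem continuous_of_monotone_of_midpoint_convex {f : ℝ → ℝ} (hf : Monotone f)
    (hmid : ∀ x, ∀ t ≥ 0, 2 * f (x + t) ≤ f x + f (x + 2 * t)) : Continuous f := by
  refine continuous_iff_continuousAt.2 fun y => ?_
  rw [hf.continuousAt_iff_leftLim_eq_rightLim]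
  refine le_antisymm (hf.leftLim_le_rightLim le_rfl) ?_
  have hright : ∀ s > 0, Tendsto (fun t => f (y + s * t)) (𝓝[>] 0)
      (𝓝 (Function.rightLim f y)) := by
    intro s hs
    refine (hf.tendsto_rightLim y).comp (tendsto_nhdsWithin_iff.2 ⟨?_, ?_⟩)
    · exact (Continuous.tendsto' (by fun_prop) 0 y (by simp)).mono_left nhdsWithin_le_nhds
    · filter_upwards [self_mem_nhdsWithin] with t ht
      exact lt_add_of_pos_right y (mul_pos hs ht)
  have hleft : Tendsto (fun t => f (y - t)) (𝓝[>] 0) (𝓝 (Function.leftLim f y)) := by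
    refine (hf.tendsto_leftLim y).comp (tendsto_nhdsWithin_iff.2 ⟨?_, ?_⟩)
    · exact (Continuous.tendsto' (by fun_prop) 0 y (by simp)).mono_left nhdsWithin_le_nhds
    · filter_upwards [self_mem_nhdsWithin] with t ht
      exact sub_lt_self y ht
  have hlim : 2 * Function.rightLim f y ≤ Function.leftLim f y + Function.rightLim f y := by
    refine le_of_tendsto_of_tendsto ((hright 1 one_pos).const_mul 2)
      (hleft.add (hright 3 three_pos)) ?_
    filter_upwards [self_mem_nhdsWithin] with t ht
    have hmidt := hmid (y - t) (2 * t) (mul_nonneg zero_le_two (le_of_lt ht))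
    ring_nf at hmidt ⊢
    exact hmidt
  linarith

theorem continuous_of_fwdDiff_iter_nonneg {f : ℝ → ℝ}
    (hΔ : ∀ h ≥ 0, ∀ n x, 0 ≤ (fwdDiff h)^[n] f x) : Continuous f := by
  have hmono : Monotone f := fun x y hxy => by
    simpa [fwdDiff] using hΔ (y - x) (sub_nonneg.2 hxy) 1 x
  refine continuous_of_monotone_of_midpoint_convex hmono fun x t ht => ?_
  have hsecond := hΔ t ht 2 x
  simp only [Function.iterate_succ_apply, Function.iterate_zero_apply, fwdDiff, add_assoc,
    ← two_mul] at hsecond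
  linarith

theorem contDiff_of_fwdDiff_iter_nonneg {f : ℝ → ℝ}
    (hΔ : ∀ h ≥ 0, ∀ n x, 0 ≤ (fwdDiff h)^[n] f x) : ContDiff ℝ ∞ f := by
  refine contDiff_iff_contDiffAt.2 fun x => ?_
  have hcont := continuous_of_fwdDiff_iter_nonneg hΔ
  obtain ⟨G, hG, hfG⟩ := exists_absolutelyMonotonicEntire_eqOn_of_fwdDiff_iter_nonneg
    (f := fun r => f (r + (x - 1))) (by fun_prop) fun h hh n => by
      rw [fwdDiff_iter_comp_add]; exact hΔ h hh n _
  have hGx : ContDiffAt ℝ ∞ (fun y => G (y - (x - 1))) x :=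
    (hG.contDiff.comp (contDiff_id.sub contDiff_const)).contDiffAt
  refine hGx.congr_of_eventuallyEq ?_
  filter_upwards [Ici_mem_nhds (sub_one_lt x)] with y hy
  simpa using hfG (mem_Ici.2 (sub_nonneg.2 hy))

/-! ### Forward differences of absolutely monotone functions -/

theorem absolutelyMonotoneOn_iff_of_isOpen {f : ℝ → ℝ} {s : Set ℝ} (hs : IsOpen s) :
    AbsolutelyMonotoneOn f s ↔
      ContDiffOn ℝ ∞ f s ∧ ∀ n : ℕ, ∀ x ∈ s, 0 ≤ iteratedDeriv n f x := by
  rw [AbsolutelyMonotoneOn.iff_iteratedDerivWithin_nonneg hs.uniqueDiffOn]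
  refine and_congr_right fun _ => forall₃_congr fun n x hx => ?_
  rw [iteratedDerivWithin_of_isOpen hs hx]

theorem monotoneOn_iteratedDeriv_of_absolutelyMonotoneOn {f : ℝ → ℝ} {a : ℝ}
    (hf : AbsolutelyMonotoneOn f (Ioi a)) (n : ℕ) : MonotoneOn (iteratedDeriv n f) (Ioi a) := by
  rw [absolutelyMonotoneOn_iff_of_isOpen isOpen_Ioi] at hf
  have hdiff : DifferentiableOn ℝ (iteratedDeriv n f) (Ioi a) :=
    (hf.1.differentiableOn_iteratedDerivWithin (mod_cast WithTop.coe_lt_top n)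
      (uniqueDiffOn_Ioi a)).congr fun x hx => (iteratedDerivWithin_of_isOpen isOpen_Ioi hx).symm
  refine monotoneOn_of_deriv_nonneg (convex_Ioi a) hdiff.continuousOn
    (hdiff.mono interior_subset) fun x hx => ?_
  rw [← iteratedDeriv_succ]
  exact hf.2 _ x (interior_subset hx)

theorem absolutelyMonotoneOn_fwdDiff {f : ℝ → ℝ} {a h : ℝ} (hh : 0 ≤ h)
    (hf : AbsolutelyMonotoneOn f (Ioi a)) : AbsolutelyMonotoneOn (fwdDiff h f) (Ioi a) := by
  have hmono := monotoneOn_iteratedDeriv_of_absolutelyMonotoneOn hf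
  rw [absolutelyMonotoneOn_iff_of_isOpen isOpen_Ioi] at hf ⊢
  have hshift : MapsTo (fun x => x + h) (Ioi a) (Ioi a) := fun x hx =>
    lt_add_of_lt_of_nonneg hx hh
  have hfshift : ContDiffOn ℝ ∞ (fun x => f (x + h)) (Ioi a) :=
    hf.1.comp (contDiff_id.add contDiff_const).contDiffOn hshift
  refine ⟨hfshift.sub hf.1, fun n x hx => ?_⟩
  have hn : ((n : ℕ∞) : WithTop ℕ∞) ≤ ∞ := mod_cast le_top
  have hderiv : iteratedDeriv n (fwdDiff h f) x =
      iteratedDeriv n f (x + h) - iteratedDeriv n f x := by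
    unfold fwdDiff
    rw [iteratedDeriv_fun_sub ((hfshift.contDiffAt (Ioi_mem_nhds hx)).of_le hn)
      ((hf.1.contDiffAt (Ioi_mem_nhds hx)).of_le hn), iteratedDeriv_comp_add_const]
  rw [hderiv, sub_nonneg]
  exact hmono n hx (hshift hx) (le_add_of_nonneg_right hh)

theorem fwdDiff_iter_nonneg_of_absolutelyMonotoneOn {f : ℝ → ℝ} {a h x : ℝ} (hh : 0 ≤ h)
    (hf : AbsolutelyMonotoneOn f (Ioi a)) (n : ℕ) (hx : x ∈ Ioi a) :
    0 ≤ (fwdDiff h)^[n] f x := by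
  have hiter : AbsolutelyMonotoneOn ((fwdDiff h)^[n] f) (Ioi a) :=
    Function.Iterate.rec (AbsolutelyMonotoneOn · (Ioi a)) hf
      (fun _ => absolutelyMonotoneOn_fwdDiff hh) n
  exact ((absolutelyMonotoneOn_iff_of_isOpen isOpen_Ioi).1 hiter).2 0 x hx

/-! ### Horn's argument -/

/-- The nonnegative polynomial with double zeros at `1, u, …, u ^ (n - 1)`. Testing
against it the moments `f (x + ε * u ^ k)` of a measure kills the Taylor coefficients of `f` at `x`
of order less than `n` and isolates the one of order `n` as `ε → 0`. -/
noncomputable def hornPolynomial (u : ℝ) (n : ℕ) : ℝ[X] :=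
  ∏ m ∈ Finset.range n, (X - C (u ^ m)) ^ 2

namespace hornPolynomial

theorem eval_eq_prod (u : ℝ) (n : ℕ) (t : ℝ) :
    (hornPolynomial u n).eval t = ∏ m ∈ Finset.range n, (t - u ^ m) ^ 2 := by
  simp [hornPolynomial, eval_prod]

theorem eval_nonneg (u : ℝ) (n : ℕ) (t : ℝ) : 0 ≤ (hornPolynomial u n).eval t := by
  rw [eval_eq_prod]
  exact Finset.prod_nonneg fun m _ => sq_nonneg _

theorem eval_pow_of_lt (u : ℝ) {m n : ℕ} (hmn : m < n) : (hornPolynomial u n).eval (u ^ m) = 0 := by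
  rw [eval_eq_prod]
  exact Finset.prod_eq_zero (Finset.mem_range.2 hmn) (by simp)

theorem eval_pow_self_pos {u : ℝ} (hu₀ : 0 < u) (hu₁ : u < 1) (n : ℕ) :
    0 < (hornPolynomial u n).eval (u ^ n) := by
  rw [eval_eq_prod]
  refine Finset.prod_pos fun m hm => sq_pos_of_neg (sub_neg.2 ?_)
  exact pow_lt_pow_right_of_lt_one₀ hu₀ hu₁ (Finset.mem_range.1 hm)

end hornPolynomial

theorem polynomial_sum_sub_isLittleO {f : ℝ → ℝ} {a : ℕ → ℝ} {n : ℕ} {u : ℝ} (hu : 0 < u)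
    (hf : (fun y => f y - ∑ m ∈ Finset.range (n + 1), a m * y ^ m) =o[𝓝[>] 0] fun y => y ^ n)
    (p : ℝ[X]) :
    (fun ε => (p.sum fun k c => c * f (ε * u ^ k)) -
      ∑ m ∈ Finset.range (n + 1), a m * p.eval (u ^ m) * ε ^ m) =o[𝓝[>] 0] fun ε => ε ^ n := by
  have hterm (k : ℕ) : (fun ε => p.coeff k * (f (ε * u ^ k) -
      ∑ m ∈ Finset.range (n + 1), a m * (ε * u ^ k) ^ m)) =o[𝓝[>] 0] fun ε => ε ^ n := by
    have hscale : Tendsto (fun ε : ℝ => ε * u ^ k) (𝓝[>] 0) (𝓝[>] 0) := by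
      refine tendsto_nhdsWithin_iff.2 ⟨Tendsto.mono_left ?_ nhdsWithin_le_nhds,
        eventually_nhdsWithin_of_forall fun ε hε => mul_pos hε (pow_pos hu k)⟩
      exact Continuous.tendsto' (by fun_prop) 0 0 (zero_mul _)
    refine ((hf.comp_tendsto hscale).trans_isBigO ?_).const_mul_left _
    refine Asymptotics.IsBigO.of_bound ‖(u ^ k) ^ n‖ (Eventually.of_forall fun ε => ?_)
    simp [mul_pow, mul_comm]
  refine (Asymptotics.IsLittleO.sum (s := p.support) fun k _ => hterm k).congr_left fun ε => ?_
  simp only [Finset.sum_apply, mul_sub, Finset.sum_sub_distrib, Finset.mul_sum, Polynomial.sum]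
  rw [Finset.sum_comm (s := p.support)]
  congr 1
  refine Finset.sum_congr rfl fun m _ => ?_
  rw [eval_eq_sum, Polynomial.sum, Finset.mul_sum, Finset.sum_mul]
  exact Finset.sum_congr rfl fun k _ => by ring

theorem nonneg_of_sub_const_mul_pow_isLittleO {g : ℝ → ℝ} {A : ℝ} {n : ℕ}
    (hg : ∀ᶠ ε in 𝓝[>] 0, 0 ≤ g ε)
    (hA : (fun ε => g ε - A * ε ^ n) =o[𝓝[>] 0] fun ε => ε ^ n) : 0 ≤ A := by
  have hlim : Tendsto (fun ε => (g ε - A * ε ^ n) / ε ^ n + A) (𝓝[>] 0) (𝓝 (0 + A)) :=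
    hA.tendsto_div_nhds_zero.add_const A
  rw [zero_add] at hlim
  refine ge_of_tendsto hlim ?_
  filter_upwards [hg, self_mem_nhdsWithin] with ε hgε hε
  have hεn : 0 < ε ^ n := pow_pos hε n
  calc 0 ≤ g ε / ε ^ n := div_nonneg hgε hεn.le
    _ = (g ε - A * ε ^ n) / ε ^ n + A := by field_simp; ring

theorem coeff_nonneg_of_hornPolynomial_sum_nonneg {f : ℝ → ℝ} {a : ℕ → ℝ} {n : ℕ} {u : ℝ}
    (hu₀ : 0 < u) (hu₁ : u < 1)
    (hf : (fun y => f y - ∑ m ∈ Finset.range (n + 1), a m * y ^ m) =o[𝓝[>] 0] fun y => y ^ n)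
    (hpos : ∀ ε > 0, 0 ≤ (hornPolynomial u n).sum fun k c => c * f (ε * u ^ k)) : 0 ≤ a n := by
  have hlead (ε : ℝ) : ∑ m ∈ Finset.range (n + 1),
      a m * (hornPolynomial u n).eval (u ^ m) * ε ^ m =
      a n * (hornPolynomial u n).eval (u ^ n) * ε ^ n := by
    refine Finset.sum_eq_single_of_mem n (Finset.self_mem_range_succ n) fun m hm hmn => ?_
    rw [hornPolynomial.eval_pow_of_lt u (by grind), mul_zero, zero_mul]
  have hexp := polynomial_sum_sub_isLittleO hu₀ hf (hornPolynomial u n)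
  simp only [hlead] at hexp
  exact nonneg_of_mul_nonneg_left
    (nonneg_of_sub_const_mul_pow_isLittleO (eventually_nhdsWithin_of_forall hpos) hexp)
    (hornPolynomial.eval_pow_self_pos hu₀ hu₁ n)

theorem iteratedDerivWithin_nonneg_of_hornPolynomial_sum_nonneg {f : ℝ → ℝ} {s : Set ℝ}
    (hs : IsOpen s) (hconv : Convex ℝ s) {x : ℝ} (hx : x ∈ s) {n : ℕ} (hf : ContDiffOn ℝ n f s)
    {u : ℝ} (hu₀ : 0 < u) (hu₁ : u < 1)
    (hpos : ∀ ε > 0, 0 ≤ (hornPolynomial u n).sum fun k c => c * f (x + ε * u ^ k)) :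
    0 ≤ iteratedDerivWithin n f s x := by
  have hshift : Tendsto (fun y => x + y) (𝓝[>] 0) (𝓝[s] x) := by
    rw [hs.nhdsWithin_eq hx]
    exact (Continuous.tendsto' (by fun_prop) 0 x (add_zero x)).mono_left nhdsWithin_le_nhds
  have htaylor : (fun y => f (x + y) - ∑ m ∈ Finset.range (n + 1),
      iteratedDerivWithin m f s x * (m.factorial : ℝ)⁻¹ * y ^ m) =o[𝓝[>] 0] fun y => y ^ n := by
    refine ((taylor_isLittleO hconv hx hf).comp_tendsto hshift).congr (fun y => ?_) fun y => ?_
    · simp only [Function.comp_apply, taylor_within_apply, add_sub_cancel_left, smul_eq_mul]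
      congr! 2
      ring
    · simp only [Function.comp_apply, add_sub_cancel_left]
  have hcoeff := coeff_nonneg_of_hornPolynomial_sum_nonneg hu₀ hu₁ htaylor hpos
  exact nonneg_of_mul_nonneg_left hcoeff (by positivity)

/-! ### Power series of measures under multiplicative convolution -/

section MultiplicativeConvolution

variable {M : Type*} [Monoid M] [MeasurableSpace M]

/-- The `n`-fold multiplicative convolution of `μ` with itself; the `0`-th power is the unit mass
at `1`. Integration of a multiplicative function turns it into the `n`-th power. -/
noncomputable def mconvPow (μ : Measure M) : ℕ → Measure M
  | 0 => Measure.dirac 1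
  | n + 1 => (mconvPow μ n).mconv μ

/-- The measure `∑ cₙ μⁿ`, with powers taken under multiplicative convolution. The coefficients are
meant to be nonnegative: negative ones are truncated to `0`. -/
noncomputable def mconvSeries (c : ℕ → ℝ) (μ : Measure M) : Measure M :=
  Measure.sum fun n => ENNReal.ofReal (c n) • mconvPow μ n

instance isFiniteMeasure_mconvPow (μ : Measure M) [IsFiniteMeasure μ] (n : ℕ) :
    IsFiniteMeasure (mconvPow μ n) := by
  induction n with
  | zero => exact inferInstanceAs (IsFiniteMeasure (Measure.dirac (1 : M)))
  | succ n ih => exact inferInstanceAs (IsFiniteMeasure ((mconvPow μ n).mconv μ))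

variable [MeasurableMul₂ M] {K : Submonoid M} {c : ℕ → ℝ} {μ : Measure M}

theorem ae_mem_mconvPow (hK : MeasurableSet (K : Set M)) (hμ : ∀ᵐ x ∂μ, x ∈ K) (n : ℕ) :
    ∀ᵐ x ∂mconvPow μ n, x ∈ K := by
  induction n with
  | zero => exact (ae_dirac_iff hK).2 K.one_mem
  | succ n ih =>
    refine (ae_map_iff measurable_mul.aemeasurable hK).2 ?_
    filter_upwards [Measure.quasiMeasurePreserving_fst.ae ih,
      Measure.quasiMeasurePreserving_snd.ae hμ] with p hfst hsnd using K.mul_mem hfst hsnd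

theorem ae_mem_mconvSeries (hK : MeasurableSet (K : Set M)) (hμ : ∀ᵐ x ∂μ, x ∈ K) :
    ∀ᵐ x ∂mconvSeries c μ, x ∈ K :=
  Measure.ae_sum_iff.2 fun n => Measure.ae_smul_measure (ae_mem_mconvPow hK hμ n) _

variable [IsFiniteMeasure μ]

theorem integral_mconvPow {χ : M →* ℝ} (hχ : Measurable χ) (n : ℕ) :
    ∫ x, χ x ∂mconvPow μ n = (∫ x, χ x ∂μ) ^ n := by
  induction n with
  | zero => rw [mconvPow, integral_dirac' _ _ hχ.stronglyMeasurable, map_one, pow_zero]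
  | succ n ih =>
    rw [mconvPow, Measure.mconv, integral_map measurable_mul.aemeasurable
      hχ.aestronglyMeasurable]
    simp only [map_mul]
    rw [integral_prod_mul (fun x => χ x) fun x => χ x, ih, pow_succ]

theorem measureReal_univ_mconvPow (n : ℕ) :
    (mconvPow μ n).real univ = μ.real univ ^ n := by
  simpa using integral_mconvPow (μ := μ) (χ := 1) measurable_const n

theorem isFiniteMeasure_mconvSeries (hc : ∀ n, 0 ≤ c n)
    (hs : Summable fun n => c n * μ.real univ ^ n) : IsFiniteMeasure (mconvSeries c μ) := by
  have hmass (n : ℕ) : (ENNReal.ofReal (c n) • mconvPow μ n) univ =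
      ENNReal.ofReal (c n * μ.real univ ^ n) := by
    rw [Measure.smul_apply, smul_eq_mul, ENNReal.ofReal_mul (hc n), ← measureReal_univ_mconvPow,
      ofReal_measureReal]
  constructor
  rw [mconvSeries, Measure.sum_apply _ MeasurableSet.univ]
  simp only [hmass]
  rw [← ENNReal.ofReal_tsum_of_nonneg (fun n => mul_nonneg (hc n) (by positivity)) hs]
  exact ENNReal.ofReal_lt_top

theorem hasSum_integral_mconvSeries (hc : ∀ n, 0 ≤ c n) {χ : M →* ℝ} (hχ : Measurable χ)
    (hint : Integrable χ (mconvSeries c μ)) :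
    HasSum (fun n => c n * (∫ x, χ x ∂μ) ^ n) (∫ x, χ x ∂mconvSeries c μ) := by
  have hsum := hasSum_integral_measure hint
  simp only [integral_smul_measure, ENNReal.toReal_ofReal (hc _), smul_eq_mul,
    integral_mconvPow hχ] at hsum
  exact hsum

end MultiplicativeConvolution

theorem AbsolutelyMonotonicEntire.exists_measure_integral_eq {M : Type*} [Monoid M]
    [MeasurableSpace M] [MeasurableMul₂ M] {G : ℝ → ℝ} (hG : AbsolutelyMonotonicEntire G)
    {K : Submonoid M} (hK : MeasurableSet (K : Set M)) {μ : Measure M} [IsFiniteMeasure μ]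
    (hμ : ∀ᵐ x ∂μ, x ∈ K) :
    ∃ σ : Measure M, IsFiniteMeasure σ ∧ (∀ᵐ x ∂σ, x ∈ K) ∧
      ∀ χ : M →* ℝ, Measurable χ → (∀ x ∈ K, |χ x| ≤ 1) → G (∫ x, χ x ∂μ) = ∫ x, χ x ∂σ := by
  obtain ⟨c, hc, hsum⟩ := hG
  have hσ : IsFiniteMeasure (mconvSeries c μ) := isFiniteMeasure_mconvSeries hc (hsum _).summable
  have hmem : ∀ᵐ x ∂mconvSeries c μ, x ∈ K := ae_mem_mconvSeries hK hμ
  refine ⟨mconvSeries c μ, hσ, hmem, fun χ hχ hbound => (hsum _).unique ?_⟩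
  exact hasSum_integral_mconvSeries hc hχ
    (.of_bound hχ.aestronglyMeasurable 1 (hmem.mono hbound))

/-! ### Moment sequences of measures on `[-1, 1]` -/

theorem integrable_pow_of_ae_abs_le_one {σ : Measure ℝ} [IsFiniteMeasure σ]
    (hσ : ∀ᵐ x ∂σ, |x| ≤ 1) (k : ℕ) : Integrable (fun x => x ^ k) σ := by
  refine .of_bound (by fun_prop) 1 (hσ.mono fun x hx => ?_)
  rw [norm_pow]
  exact pow_le_one₀ (norm_nonneg x) hx

theorem integral_eval_eq_sum {σ : Measure ℝ} (hσ : ∀ k : ℕ, Integrable (fun x => x ^ k) σ)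
    (p : ℝ[X]) : ∫ x, p.eval x ∂σ = p.sum fun k c => c * ∫ x, x ^ k ∂σ := by
  simp only [eval_eq_sum, Polynomial.sum]
  rw [integral_finsetSum _ fun k _ => (hσ k).const_mul _]
  simp only [integral_const_mul]

theorem integral_eval_eq_of_X_pow_dvd {σ τ : Measure ℝ}
    (hσ : ∀ k : ℕ, Integrable (fun x => x ^ k) σ) (hτ : ∀ k : ℕ, Integrable (fun x => x ^ k) τ)
    {K : ℕ} (hK : ∀ k ≥ K, ∫ x, x ^ k ∂σ = ∫ x, x ^ k ∂τ) {p : ℝ[X]} (hp : X ^ K ∣ p) :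
    ∫ x, p.eval x ∂σ = ∫ x, p.eval x ∂τ := by
  rw [integral_eval_eq_sum hσ, integral_eval_eq_sum hτ]
  refine Finset.sum_congr rfl fun k hk => congrArg (p.coeff k * ·) (hK k ?_)
  by_contra! hkK
  exact mem_support_iff.1 hk (X_pow_dvd_iff.1 hp k hkK)

/-- Polynomials which vanish at `0` to order at least `K` and which, as `N → ∞`, converge boundedly
on `[-1, 1]` to the indicator function of the complement of `0` (for `K ≠ 0`). -/
noncomputable def zeroCutoff (K N : ℕ) : ℝ[X] :=
  (1 - (1 - X ^ 2) ^ N) ^ K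

namespace zeroCutoff

theorem X_pow_dvd (K N : ℕ) : X ^ K ∣ zeroCutoff K N := by
  have hsq := sub_dvd_pow_sub_pow 1 (1 - X ^ 2 : ℝ[X]) N
  rw [one_pow, sub_sub_cancel] at hsq
  exact pow_dvd_pow_of_dvd ((dvd_pow_self X two_ne_zero).trans hsq) K

theorem abs_eval_le_one {x : ℝ} (hx : |x| ≤ 1) (K N : ℕ) : |(zeroCutoff K N).eval x| ≤ 1 := by
  have hsq : x ^ 2 ≤ 1 := (sq_le_one_iff_abs_le_one x).2 hx
  have hpow_nonneg : 0 ≤ (1 - x ^ 2) ^ N := pow_nonneg (sub_nonneg.2 hsq) N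
  have hpow_le : (1 - x ^ 2) ^ N ≤ 1 :=
    pow_le_one₀ (sub_nonneg.2 hsq) (sub_le_self _ (sq_nonneg x))
  simp only [zeroCutoff, eval_pow, eval_sub, eval_one, eval_X, abs_pow]
  refine pow_le_one₀ (abs_nonneg _) (abs_le.2 ⟨?_, ?_⟩) <;> linarith

theorem tendsto_eval {x : ℝ} (hx : |x| ≤ 1) (hx₀ : x ≠ 0) (K : ℕ) :
    Tendsto (fun N => (zeroCutoff K N).eval x) atTop (𝓝 1) := by
  have hsq : x ^ 2 ≤ 1 := (sq_le_one_iff_abs_le_one x).2 hx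
  have hpow : Tendsto (fun N : ℕ => (1 - x ^ 2) ^ N) atTop (𝓝 0) :=
    tendsto_pow_atTop_nhds_zero_of_lt_one (sub_nonneg.2 hsq) (sub_lt_self _ (by positivity))
  simpa [zeroCutoff] using (hpow.const_sub 1).pow K

theorem tendsto_integral {σ : Measure ℝ} [IsFiniteMeasure σ] (hσ : ∀ᵐ x ∂σ, |x| ≤ 1) {j : ℕ}
    (hj : j ≠ 0) (K : ℕ) :
    Tendsto (fun N => ∫ x, (X ^ j * zeroCutoff K N).eval x ∂σ) atTop (𝓝 (∫ x, x ^ j ∂σ)) := by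
  refine tendsto_integral_of_dominated_convergence (fun _ => 1)
    (fun N => (Polynomial.continuous _).aestronglyMeasurable) (integrable_const _) (fun N => ?_) ?_
  · filter_upwards [hσ] with x hx
    rw [eval_mul, eval_pow, eval_X, norm_mul, norm_pow]
    exact mul_le_one₀ (pow_le_one₀ (norm_nonneg x) hx) (norm_nonneg _) (abs_eval_le_one hx K N)
  · filter_upwards [hσ] with x hx
    obtain rfl | hx₀ := eq_or_ne x 0
    · simp [hj]
    · simpa using (tendsto_eval hx hx₀ K).const_mul (x ^ j)

end zeroCutoff

/-- `s` is the sequence of moments of a finite measure on `[-1, 1]`. -/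
def IsMomentSequence (s : ℕ → ℝ) : Prop :=
  ∃ σ : Measure ℝ, IsFiniteMeasure σ ∧ (∀ᵐ x ∂σ, |x| ≤ 1) ∧ ∀ k, s k = ∫ x, x ^ k ∂σ

theorem isMomentSequence_pow {u : ℝ} (hu : |u| ≤ 1) : IsMomentSequence fun k => u ^ k :=
  ⟨.dirac u, inferInstance, (ae_dirac_iff (measurableSet_le (by fun_prop) (by fun_prop))).2 hu,
    fun _ => (integral_dirac _ u).symm⟩

namespace IsMomentSequence

variable {s t : ℕ → ℝ}

theorem const_mul (hs : IsMomentSequence s) {a : ℝ} (ha : 0 ≤ a) :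
    IsMomentSequence fun k => a * s k := by
  obtain ⟨σ, hfin, hmem, hmom⟩ := hs
  refine ⟨ENNReal.ofReal a • σ, σ.smul_finite ENNReal.ofReal_ne_top,
    Measure.ae_smul_measure hmem _, fun k => ?_⟩
  simp only [hmom, integral_smul_measure, ENNReal.toReal_ofReal ha, smul_eq_mul]

theorem add (hs : IsMomentSequence s) (ht : IsMomentSequence t) :
    IsMomentSequence fun k => s k + t k := by
  obtain ⟨σ, hσ, hσ_mem, hσ_mom⟩ := hs
  obtain ⟨τ, hτ, hτ_mem, hτ_mom⟩ := ht
  refine ⟨σ + τ, inferInstance, ae_add_measure_iff.2 ⟨hσ_mem, hτ_mem⟩, fun k => ?_⟩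
  simp only [hσ_mom, hτ_mom, integral_add_measure (integrable_pow_of_ae_abs_le_one hσ_mem k)
    (integrable_pow_of_ae_abs_le_one hτ_mem k)]

theorem sum_nonneg (hs : IsMomentSequence s) {p : ℝ[X]} (hp : ∀ x, |x| ≤ 1 → 0 ≤ p.eval x) :
    0 ≤ p.sum fun k c => c * s k := by
  obtain ⟨σ, hσ, hmem, hmom⟩ := hs
  simp only [hmom]
  rw [← integral_eval_eq_sum (integrable_pow_of_ae_abs_le_one hmem)]
  exact integral_nonneg_of_ae (hmem.mono hp)

theorem zero_nonneg (hs : IsMomentSequence s) : 0 ≤ s 0 := by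
  obtain ⟨σ, -, -, hmom⟩ := hs
  simp [hmom]

theorem sub_succ (hs : IsMomentSequence s) : IsMomentSequence fun k => s k - s (k + 1) := by
  obtain ⟨σ, hσ, hmem, hmom⟩ := hs
  have hint := integrable_pow_of_ae_abs_le_one hmem
  have hdensity : Integrable (fun x => 1 - x) σ :=
    (integrable_const 1).sub (by simpa only [pow_one] using hint 1)
  refine ⟨σ.withDensity fun x => ENNReal.ofReal (1 - x),
    isFiniteMeasure_withDensity_ofReal hdensity.2,
    (withDensity_absolutelyContinuous σ _).ae_le hmem, fun k => ?_⟩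
  simp only [hmom]
  rw [integral_withDensity_eq_integral_toReal_smul (by fun_prop) (by simp),
    ← integral_sub (hint k) (hint (k + 1))]
  refine integral_congr_ae (hmem.mono fun x hx => ?_)
  simp only [ENNReal.toReal_ofReal (sub_nonneg.2 (le_of_abs_le hx)), smul_eq_mul]
  ring

theorem eq_of_eventuallyEq (hs : IsMomentSequence s) (ht : IsMomentSequence t)
    (hst : s =ᶠ[atTop] t) {j : ℕ} (hj : j ≠ 0) : s j = t j := by
  obtain ⟨K, hK⟩ := eventually_atTop.1 hst
  obtain ⟨σ, hσ, hσ_mem, hσ_mom⟩ := hs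
  obtain ⟨τ, hτ, hτ_mem, hτ_mom⟩ := ht
  have hcutoff (N : ℕ) :
      ∫ x, (X ^ j * zeroCutoff K N).eval x ∂σ = ∫ x, (X ^ j * zeroCutoff K N).eval x ∂τ :=
    integral_eval_eq_of_X_pow_dvd (integrable_pow_of_ae_abs_le_one hσ_mem)
      (integrable_pow_of_ae_abs_le_one hτ_mem)
      (fun k hk => by rw [← hσ_mom, ← hτ_mom, hK k hk])
      ((zeroCutoff.X_pow_dvd K N).mul_left _)
  rw [hσ_mom, hτ_mom]
  refine tendsto_nhds_unique (zeroCutoff.tendsto_integral hσ_mem hj K) ?_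
  simpa only [hcutoff] using zeroCutoff.tendsto_integral hτ_mem hj K

end IsMomentSequence

theorem isMomentSequence_const_add_mul_pow {a b u : ℝ} (ha : 0 ≤ a) (hb : 0 ≤ b) (hu : |u| ≤ 1) :
    IsMomentSequence fun k => a + b * u ^ k := by
  simpa using ((isMomentSequence_pow abs_one.le).const_mul ha).add
    ((isMomentSequence_pow hu).const_mul hb)

theorem AbsolutelyMonotonicEntire.isMomentSequence_comp {G : ℝ → ℝ}
    (hG : AbsolutelyMonotonicEntire G) {s : ℕ → ℝ} (hs : IsMomentSequence s) :
    IsMomentSequence (G ∘ s) := by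
  obtain ⟨μ, hμ, hmem, hmom⟩ := hs
  obtain ⟨σ, hσ, hσ_mem, hσ_mom⟩ := hG.exists_measure_integral_eq
    (K := Submonoid.unitClosedBall ℝ) Metric.isClosed_closedBall.measurableSet
    (hmem.mono fun x hx => (Submonoid.mem_unitClosedBall ℝ).2 hx)
  refine ⟨σ, hσ, hσ_mem.mono fun x hx => (Submonoid.mem_unitClosedBall ℝ).1 hx, fun k => ?_⟩
  rw [Function.comp_apply, hmom]
  refine hσ_mom (powMonoidHom k) (measurable_id.pow_const k) fun x hx => ?_
  rw [powMonoidHom_apply, abs_pow]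
  exact pow_le_one₀ (abs_nonneg x) ((Submonoid.mem_unitClosedBall ℝ).1 hx)

/-! ### Functions preserving moment sequences -/

theorem isMomentSequence_fwdDiff_iter {f : ℝ → ℝ} {h : ℝ}
    (hf : ∀ x, IsMomentSequence fun k => f (x - k * h)) (n : ℕ) (x : ℝ) :
    IsMomentSequence fun k => (fwdDiff h)^[n] f (x - k * h) := by
  induction n generalizing x with
  | zero => exact hf x
  | succ n ih =>
    have hstep (k : ℕ) : (fwdDiff h)^[n + 1] f (x - k * h) =
        (fwdDiff h)^[n] f (x + h - k * h) - (fwdDiff h)^[n] f (x + h - (k + 1 : ℕ) * h) := by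
      have hnext : x + h - (k + 1 : ℕ) * h = x - k * h := by push_cast; ring
      rw [Function.iterate_succ_apply', fwdDiff, sub_add_eq_add_sub, hnext]
    simpa only [hstep] using (ih (x + h)).sub_succ

/-- The entrywise action of `F` maps moment sequences of measures on `[-1, 1]` to such sequences. -/
def PreservesMomentSequences (F : ℝ → ℝ) : Prop :=
  ∀ s, IsMomentSequence s → IsMomentSequence (F ∘ s)

namespace PreservesMomentSequences

variable {F : ℝ → ℝ}

theorem fwdDiff_iter_comp_exp_nonneg (hF : PreservesMomentSequences F) {h : ℝ} (hh : 0 ≤ h)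
    (n : ℕ) (x : ℝ) : 0 ≤ (fwdDiff h)^[n] (F ∘ Real.exp) x := by
  have hmoment (y : ℝ) : IsMomentSequence fun k => (F ∘ Real.exp) (y - k * h) := by
    have hgeom := isMomentSequence_const_add_mul_pow le_rfl (Real.exp_pos y).le
      ((abs_of_pos (Real.exp_pos (-h))).trans_le (Real.exp_le_one_iff.2 (neg_nonpos.2 hh)))
    convert hF _ hgeom using 2 with k
    simp only [Function.comp_apply, zero_add]
    rw [← Real.exp_nat_mul, ← Real.exp_add, mul_neg, sub_eq_add_neg]
  simpa using (isMomentSequence_fwdDiff_iter hmoment n x).zero_nonneg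

theorem contDiffOn_Ioi (hF : PreservesMomentSequences F) : ContDiffOn ℝ ∞ F (Ioi 0) := by
  have hexp : ContDiff ℝ ∞ (F ∘ Real.exp) :=
    contDiff_of_fwdDiff_iter_nonneg fun h hh => hF.fwdDiff_iter_comp_exp_nonneg hh
  refine (hexp.comp_contDiffOn (Real.contDiffOn_log.mono fun x hx => ne_of_gt hx)).congr
    fun x hx => ?_
  simp [Real.exp_log hx]

theorem absolutelyMonotoneOn_Ioi (hF : PreservesMomentSequences F) :
    AbsolutelyMonotoneOn F (Ioi 0) := by
  rw [AbsolutelyMonotoneOn.iff_iteratedDerivWithin_nonneg (uniqueDiffOn_Ioi 0)]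
  refine ⟨hF.contDiffOn_Ioi, fun n x hx => ?_⟩
  refine iteratedDerivWithin_nonneg_of_hornPolynomial_sum_nonneg isOpen_Ioi (convex_Ioi 0) hx
    (hF.contDiffOn_Ioi.of_le (mod_cast le_top)) one_half_pos one_half_lt_one fun ε hε => ?_
  have hu : |(1 / 2 : ℝ)| ≤ 1 := by norm_num [abs_of_pos]
  exact (hF _ (isMomentSequence_const_add_mul_pow (le_of_lt hx) hε.le hu)).sum_nonneg
    fun t _ => hornPolynomial.eval_nonneg _ n t

theorem eq_of_eqOn_Ici (hF : PreservesMomentSequences F) {a : ℝ} (ha : 0 ≤ a) {G : ℝ → ℝ}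
    (hG : AbsolutelyMonotonicEntire G) (hFG : EqOn (fun x => F (a + x)) G (Ici 0)) :
    (fun x => F (a + x)) = G := by
  ext y
  set b := |y - 1| + 1
  set v := (y - 1) / b
  have hb : 0 < b := by positivity
  have hbv : b * v = y - 1 := mul_div_cancel₀ _ hb.ne'
  have hv : |v| < 1 := by
    rw [abs_div, abs_of_pos hb, div_lt_one hb]
    exact lt_add_one _
  have hlim : Tendsto (fun k : ℕ => 1 + b * v ^ k) atTop (𝓝 1) := by
    simpa using ((tendsto_pow_atTop_nhds_zero_of_abs_lt_one hv).const_mul b).const_add 1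
  have hFmoment : IsMomentSequence fun k : ℕ => F (a + (1 + b * v ^ k)) := by
    simpa only [Function.comp_def, add_assoc] using hF _
      (isMomentSequence_const_add_mul_pow (add_nonneg ha zero_le_one) hb.le hv.le)
  have hGmoment : IsMomentSequence fun k : ℕ => G (1 + b * v ^ k) :=
    hG.isMomentSequence_comp (isMomentSequence_const_add_mul_pow zero_le_one hb.le hv.le)
  have heventually : ∀ᶠ k : ℕ in atTop, F (a + (1 + b * v ^ k)) = G (1 + b * v ^ k) :=
    (hlim.eventually (lt_mem_nhds one_pos)).mono fun k hk => hFG (le_of_lt hk)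
  simpa [hbv] using hFmoment.eq_of_eventuallyEq hGmoment heventually one_ne_zero

theorem absolutelyMonotonicEntire_comp_const_add (hF : PreservesMomentSequences F) {a : ℝ}
    (ha : 0 < a) : AbsolutelyMonotonicEntire fun x => F (a + x) := by
  have hcont : ContinuousOn (fun x => F (a + x)) (Ici 0) :=
    hF.contDiffOn_Ioi.continuousOn.comp (by fun_prop) fun x hx => add_pos_of_pos_of_nonneg ha hx
  obtain ⟨G, hG, hFG⟩ := exists_absolutelyMonotonicEntire_eqOn_of_fwdDiff_iter_nonneg hcont
    fun h hh n => by
      simp only [add_comm a, fwdDiff_iter_comp_add, zero_add]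
      exact fwdDiff_iter_nonneg_of_absolutelyMonotoneOn hh hF.absolutelyMonotoneOn_Ioi n ha
  rwa [hF.eq_of_eqOn_Ici ha.le hG hFG]

theorem continuous (hF : PreservesMomentSequences F) : Continuous F := by
  have hshift := (hF.absolutelyMonotonicEntire_comp_const_add one_pos).contDiff.continuous
  simpa [Function.comp_def] using hshift.comp (continuous_sub_right 1)

theorem absolutelyMonotonicEntire (hF : PreservesMomentSequences F) :
    AbsolutelyMonotonicEntire F := by
  have hlim (x : ℝ) : Tendsto (fun j : ℕ => F (1 / (j + 1) + x)) atTop (𝓝 (F (0 + x))) :=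
    (hF.continuous.tendsto _).comp (tendsto_one_div_add_atTop_nhds_zero_nat.add_const x)
  obtain ⟨G, hG, hFG⟩ := exists_absolutelyMonotonicEntire_eqOn_of_tendsto
    (fun j => hF.absolutelyMonotonicEntire_comp_const_add (Nat.one_div_pos_of_nat (n := j)))
    fun x _ => hlim x
  rw [← hF.eq_of_eqOn_Ici le_rfl hG hFG] at hG
  simpa using hG

end PreservesMomentSequences

/-! ### Moment families of measures on cubes -/

section MomentFamilies

variable {ι : Type*} [Fintype ι]

/-- The monomial function `x ↦ ∏ xᵢ ^ αᵢ`, as a multiplicative function on `ℝ^ι`. -/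
noncomputable def monomialHom (α : ι → ℕ) : (ι → ℝ) →* ℝ :=
  ∏ i, (powMonoidHom (α i)).comp (Pi.evalMonoidHom (fun _ => ℝ) i)

theorem monomialHom_apply (α : ι → ℕ) (x : ι → ℝ) : monomialHom α x = ∏ i, x i ^ α i := by
  simp [monomialHom]

theorem measurable_monomialHom (α : ι → ℕ) : Measurable (monomialHom α) := by
  rw [funext (monomialHom_apply α)]
  fun_prop

theorem abs_monomialHom_le_one (α : ι → ℕ) {x : ι → ℝ} (hx : ∀ i, |x i| ≤ 1) :
    |monomialHom α x| ≤ 1 := by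
  rw [monomialHom_apply, Finset.abs_prod]
  refine Finset.prod_le_one (fun i _ => abs_nonneg _) fun i _ => ?_
  rw [abs_pow]
  exact pow_le_one₀ (abs_nonneg _) (hx i)

theorem monomialHom_single [DecidableEq ι] (i : ι) (k : ℕ) (x : ι → ℝ) :
    monomialHom (Pi.single i k) x = x i ^ k := by
  rw [monomialHom_apply, Fintype.prod_eq_single i fun j hj => by simp [hj], Pi.single_eq_same]

theorem monomialHom_mulSingle [DecidableEq ι] (α : ι → ℕ) (i : ι) (t : ℝ) :
    monomialHom α (Pi.mulSingle i t) = t ^ α i := by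
  rw [monomialHom_apply, Fintype.prod_eq_single i fun j hj => by simp [hj], Pi.mulSingle_eq_same]

/-- `s` is the family of moments of a finite measure on the cube `[-1, 1]^ι`. -/
def IsMomentFamily (s : (ι → ℕ) → ℝ) : Prop :=
  ∃ σ : Measure (ι → ℝ), IsFiniteMeasure σ ∧ (∀ᵐ x ∂σ, ∀ i, |x i| ≤ 1) ∧
    ∀ α, s α = ∫ x, monomialHom α x ∂σ

theorem IsMomentSequence.isMomentFamily {s : ℕ → ℝ} (hs : IsMomentSequence s) (i : ι) :
    IsMomentFamily fun α => s (α i) := by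
  classical
  obtain ⟨σ, hσ, hmem, hmom⟩ := hs
  have hsingle : Measurable fun t : ℝ => (Pi.mulSingle i t : ι → ℝ) := measurable_update 1
  refine ⟨σ.map fun t => Pi.mulSingle i t, inferInstance, ?_, fun α => ?_⟩
  · refine (ae_map_iff hsingle.aemeasurable (by measurability)).2 (hmem.mono fun t ht j => ?_)
    obtain rfl | hij := eq_or_ne j i
    · rwa [Pi.mulSingle_eq_same]
    · rw [Pi.mulSingle_eq_of_ne hij, abs_one]
  · rw [integral_map hsingle.aemeasurable (measurable_monomialHom α).aestronglyMeasurable]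
    simp only [hmom, monomialHom_mulSingle]

theorem IsMomentFamily.isMomentSequence [DecidableEq ι] {s : (ι → ℕ) → ℝ} (hs : IsMomentFamily s)
    (i : ι) : IsMomentSequence fun k => s (Pi.single i k) := by
  obtain ⟨σ, hσ, hmem, hmom⟩ := hs
  have hproj : Measurable fun x : ι → ℝ => x i := measurable_pi_apply i
  refine ⟨σ.map fun x => x i, inferInstance, ?_, fun k => ?_⟩
  · exact (ae_map_iff hproj.aemeasurable (measurableSet_le (by fun_prop) (by fun_prop))).2
      (hmem.mono fun x hx => hx i)
  · rw [integral_map hproj.aemeasurable (by fun_prop)]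
    simp only [hmom, monomialHom_single]

theorem AbsolutelyMonotonicEntire.isMomentFamily_comp {G : ℝ → ℝ}
    (hG : AbsolutelyMonotonicEntire G) {s : (ι → ℕ) → ℝ} (hs : IsMomentFamily s) :
    IsMomentFamily (G ∘ s) := by
  obtain ⟨μ, hμ, hmem, hmom⟩ := hs
  let K : Submonoid (ι → ℝ) := Submonoid.pi univ fun _ => Submonoid.unitClosedBall ℝ
  have hK : MeasurableSet (K : Set (ι → ℝ)) :=
    .univ_pi fun _ => Metric.isClosed_closedBall.measurableSet
  have hmem_K (x : ι → ℝ) : x ∈ K ↔ ∀ i, |x i| ≤ 1 := by simp [K, Submonoid.mem_pi]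
  simp only [← hmem_K] at hmem
  obtain ⟨σ, hσ, hσ_mem, hσ_mom⟩ := hG.exists_measure_integral_eq hK hmem
  refine ⟨σ, hσ, hσ_mem.mono fun x hx => (hmem_K x).1 hx, fun α => ?_⟩
  rw [Function.comp_apply, hmom]
  exact hσ_mom (monomialHom α) (measurable_monomialHom α) fun x hx =>
    abs_monomialHom_le_one α ((hmem_K x).1 hx)

end MomentFamilies

section AdmissibleMeasures

variable {d : ℕ} {μ : Measure (Fin d → ℝ)}

theorem momentD_eq_integral_monomialHom (α : Fin d → ℕ) :
    momentD μ α = ∫ x, monomialHom α x ∂μ := by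
  simp only [momentD, monomialHom_apply]

theorem measure_compl_pi_Icc_eq_zero_iff :
    μ (Set.pi univ fun _ => Icc (-1 : ℝ) 1)ᶜ = 0 ↔ ∀ᵐ x ∂μ, ∀ i, |x i| ≤ 1 := by
  rw [← mem_ae_iff]
  simp only [abs_le, Filter.Eventually, Set.pi, mem_univ, true_imp_iff, mem_Icc]

theorem isAdmissibleD_iff_isFiniteMeasure (hμ : ∀ᵐ x ∂μ, ∀ i, |x i| ≤ 1) :
    IsAdmissibleD μ ↔ IsFiniteMeasure μ := by
  refine ⟨fun hadm => ?_, fun hfin α => ?_⟩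
  · exact (integrable_const_iff_isFiniteMeasure one_ne_zero).1 (by simpa using hadm 0)
  · simp only [← monomialHom_apply]
    exact .of_bound (measurable_monomialHom α).aestronglyMeasurable 1
      (hμ.mono fun x => abs_monomialHom_le_one α)

theorem isMomentFamily_iff_exists_isAdmissibleD {s : (Fin d → ℕ) → ℝ} :
    IsMomentFamily s ↔ ∃ σ : Measure (Fin d → ℝ), IsAdmissibleD σ ∧
      σ (Set.pi univ fun _ => Icc (-1 : ℝ) 1)ᶜ = 0 ∧ ∀ α, s α = momentD σ α := by
  refine exists_congr fun σ => ?_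
  simp only [measure_compl_pi_Icc_eq_zero_iff, momentD_eq_integral_monomialHom]
  exact and_congr_left fun h => (isAdmissibleD_iff_isFiniteMeasure h.1).symm

end AdmissibleMeasures

/-- A function maps the moment families of admissible measures on `[-1,1]^d` into
themselves entrywise iff it is an absolutely monotonic entire function. -/
theorem moment_transform_multidim (d : ℕ) (hd : 1 ≤ d) (F : ℝ → ℝ) :
    (∀ μ : Measure (Fin d → ℝ), IsAdmissibleD μ →
      μ (Set.pi Set.univ fun _ => Set.Icc (-1 : ℝ) 1)ᶜ = 0 →
      ∃ σ : Measure (Fin d → ℝ), IsAdmissibleD σ ∧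
        σ (Set.pi Set.univ fun _ => Set.Icc (-1 : ℝ) 1)ᶜ = 0 ∧
        ∀ α : Fin d → ℕ, F (momentD μ α) = momentD σ α) ↔
    AbsolutelyMonotonicEntire F := by
  constructor
  · intro hF
    refine PreservesMomentSequences.absolutelyMonotonicEntire fun s hs => ?_
    let i : Fin d := ⟨0, hd⟩
    obtain ⟨μ, hμ, hbox, hmom⟩ := isMomentFamily_iff_exists_isAdmissibleD.1 (hs.isMomentFamily i)
    have hFs : IsMomentFamily fun α => F (s (α i)) :=
      isMomentFamily_iff_exists_isAdmissibleD.2 (by simpa only [← hmom] using hF μ hμ hbox)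
    simpa [Function.comp_def] using hFs.isMomentSequence i
  · intro hF μ hμ hbox
    have hmom : IsMomentFamily (momentD μ) :=
      isMomentFamily_iff_exists_isAdmissibleD.2 ⟨μ, hμ, hbox, fun _ => rfl⟩
    exact isMomentFamily_iff_exists_isAdmissibleD.1 (hF.isMomentFamily_comp hmom)
end
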